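/- arXiv:0712.1707 — 2 statements merged into one kernel-verified Lean document; each statement's English description precedes it below -/
import Mathlib

section
/- Let X = {j_1,…,j_k} be a vertex. Then, as λ → +∞ along the real axis, the integral ∫_{C⁺_X} e^{−λ f_0(x)} (∏_{j=1}^N |f_j(x)|^{α_j}) · |det(l_{j_1},…,l_{j_k})| · (∏_{j∈X} |f_j(x)|)^{−1} dx is asymptotically equivalent to e^{−λ f_0(X)} · λ^{−α_X} · ∏_{j∈X} Γ(α_j) |l_j(e_{X∖{j}})|^{α_j} · ∏_{r∉X} |f_r(X)|^{α_r}, where det(l_{j_1},…,l_{j_k}) is the determinant of the matrix whose rows are the linear forms l_{j_1},…,l_{j_k} in the standard coordinates, and Γ is the Gamma function. -/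
open Set MeasureTheory Filter
open scoped Classical Real

noncomputable section

namespace HypArr

variable {k N : ℕ}

/-- The hyperplane `H j = f j ⁻¹ (0)` of the `j`-th affine form. -/
def Hyp (f : Fin N → ((Fin k → ℝ) →ᵃ[ℝ] ℝ)) (j : Fin N) : Set (Fin k → ℝ) :=
  {x | f j x = 0}

/-- The complement `ℝ^k ∖ (H 1 ∪ ⋯ ∪ H N)` of the union of all the hyperplanes. -/
def HypCompl (f : Fin N → ((Fin k → ℝ) →ᵃ[ℝ] ℝ)) : Set (Fin k → ℝ) :=
  {x | ∀ j, f j x ≠ 0}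

/-- `Δ` is an arrangement domain: a connected component of `ℝ^k ∖ (H 1 ∪ ⋯ ∪ H N)`. -/
def IsDomain (f : Fin N → ((Fin k → ℝ) →ᵃ[ℝ] ℝ)) (Δ : Set (Fin k → ℝ)) : Prop :=
  ∃ x ∈ HypCompl f, Δ = connectedComponentIn (HypCompl f) x

/-- The hyperplanes `H 1, …, H N` are in generic position in `ℝ^k`: they are pairwise
distinct, any `k` of them intersect in exactly one point, and any `k+1` of them have
empty intersection. -/
def Generic (f : Fin N → ((Fin k → ℝ) →ᵃ[ℝ] ℝ)) : Prop :=
  (∀ i j : Fin N, i ≠ j → Hyp f i ≠ Hyp f j) ∧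
  (∀ S : Finset (Fin N), S.card = k → ∃! x : Fin k → ℝ, ∀ j ∈ S, f j x = 0) ∧
  (∀ S : Finset (Fin N), S.card = k + 1 → ¬ ∃ x : Fin k → ℝ, ∀ j ∈ S, f j x = 0)

/-- `X` is a vertex of the arrangement. -/
def IsVertex (f : Fin N → ((Fin k → ℝ) →ᵃ[ℝ] ℝ)) (X : Fin k → ℝ) : Prop :=
  ∃ S : Finset (Fin N), S.card = k ∧ ∀ j ∈ S, f j X = 0

/-- `X` is the vertex of the arrangement with index set `S`. -/
def IsVertexOf (f : Fin N → ((Fin k → ℝ) →ᵃ[ℝ] ℝ)) (S : Finset (Fin N))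
    (X : Fin k → ℝ) : Prop :=
  S.card = k ∧ ∀ j ∈ S, f j X = 0

/-- The linear form `f0` is in general position with respect to the arrangement:
it takes pairwise distinct values at the vertices and is nonconstant on each
line `L_U = ∩_{j ∈ U} H j` for `U` of cardinality `k - 1`. -/
def GenericLin (f : Fin N → ((Fin k → ℝ) →ᵃ[ℝ] ℝ)) (f0 : (Fin k → ℝ) →ₗ[ℝ] ℝ) : Prop :=
  (∀ X Y : Fin k → ℝ, IsVertex f X → IsVertex f Y → X ≠ Y → f0 X ≠ f0 Y) ∧
  ∀ U : Finset (Fin N), U.card = k - 1 →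
    ∃ x y : Fin k → ℝ, (∀ j ∈ U, f j x = 0) ∧ (∀ j ∈ U, f j y = 0) ∧ f0 x ≠ f0 y

/-- `C` is a connected component of `ℝ^k ∖ ⋃_{j ∈ S} H j`. -/
def IsConeComp (f : Fin N → ((Fin k → ℝ) →ᵃ[ℝ] ℝ)) (S : Finset (Fin N))
    (C : Set (Fin k → ℝ)) : Prop :=
  ∃ y, (∀ j ∈ S, f j y ≠ 0) ∧ C = connectedComponentIn {z | ∀ j ∈ S, f j z ≠ 0} y

/-- `C` is the cone `C⁺_X` of the vertex `X` with index set `S`: the unique connected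
component of `ℝ^k ∖ ⋃_{j ∈ S} H j` on which `f0 - f0 X` is everywhere positive. -/
def IsPosCone (f : Fin N → ((Fin k → ℝ) →ᵃ[ℝ] ℝ)) (f0 : (Fin k → ℝ) →ₗ[ℝ] ℝ)
    (S : Finset (Fin N)) (X : Fin k → ℝ) (C : Set (Fin k → ℝ)) : Prop :=
  IsConeComp f S C ∧ ∀ y ∈ C, f0 X < f0 y

/-- `C` is the cone `C⁻_X` of the vertex `X` with index set `S`: the unique connected
component of `ℝ^k ∖ ⋃_{j ∈ S} H j` on which `f0 - f0 X` is everywhere negative. -/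
def IsNegCone (f : Fin N → ((Fin k → ℝ) →ᵃ[ℝ] ℝ)) (f0 : (Fin k → ℝ) →ₗ[ℝ] ℝ)
    (S : Finset (Fin N)) (X : Fin k → ℝ) (C : Set (Fin k → ℝ)) : Prop :=
  IsConeComp f S C ∧ ∀ y ∈ C, f0 y < f0 X

/-- `Δ` is the domain `Δ_X` of the vertex `X`: the unique arrangement domain whose
closure contains `X` and on which `f0 - f0 X > 0`. -/
def IsDomOf (f : Fin N → ((Fin k → ℝ) →ᵃ[ℝ] ℝ)) (f0 : (Fin k → ℝ) →ₗ[ℝ] ℝ)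
    (X : Fin k → ℝ) (Δ : Set (Fin k → ℝ)) : Prop :=
  IsDomain f Δ ∧ X ∈ closure Δ ∧ ∀ y ∈ Δ, f0 X < f0 y

/-- `Δ` is the domain `Δ⁻_X` of the vertex `X`: the unique arrangement domain whose
closure contains `X` and on which `f0 - f0 X < 0`. -/
def IsNegDomOf (f : Fin N → ((Fin k → ℝ) →ᵃ[ℝ] ℝ)) (f0 : (Fin k → ℝ) →ₗ[ℝ] ℝ)
    (X : Fin k → ℝ) (Δ : Set (Fin k → ℝ)) : Prop :=
  IsDomain f Δ ∧ X ∈ closure Δ ∧ ∀ y ∈ Δ, f0 y < f0 X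

/-- `Δ` belongs to `𝒟⁺`: it is an arrangement domain on which `f0` is bounded
from below. -/
def MemDplus (f : Fin N → ((Fin k → ℝ) →ᵃ[ℝ] ℝ)) (f0 : (Fin k → ℝ) →ₗ[ℝ] ℝ)
    (Δ : Set (Fin k → ℝ)) : Prop :=
  IsDomain f Δ ∧ BddBelow (f0 '' Δ)

/-- `Δ` belongs to `𝒟⁻`: it is an arrangement domain on which `f0` is bounded
from above. -/
def MemDminus (f : Fin N → ((Fin k → ℝ) →ᵃ[ℝ] ℝ)) (f0 : (Fin k → ℝ) →ₗ[ℝ] ℝ)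
    (Δ : Set (Fin k → ℝ)) : Prop :=
  IsDomain f Δ ∧ BddAbove (f0 '' Δ)

/-- The set `W` (a hyperplane) separates `S` from `T`: they lie in different connected
components of the complement of `W`. -/
def Separates {α : Type*} [TopologicalSpace α] (W S T : Set α) : Prop :=
  ∃ x ∈ S, ∃ y ∈ T, S ⊆ connectedComponentIn Wᶜ x ∧ T ⊆ connectedComponentIn Wᶜ y ∧
    connectedComponentIn Wᶜ x ≠ connectedComponentIn Wᶜ y

/-- The index set of `ℋ(Δ, Δ')`, the set of hyperplanes separating `Δ` from `Δ'`. -/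
def SepSet (f : Fin N → ((Fin k → ℝ) →ᵃ[ℝ] ℝ)) (Δ Δ' : Set (Fin k → ℝ)) :
    Finset (Fin N) :=
  Finset.univ.filter fun j => Separates (Hyp f j) Δ Δ'

/-!
Parametrize the cone `C⁺_X` by `x = X + ∑ j ∈ X, t_j e_j`, where `e_j = e_{X∖{j}}`, so that
`f_j(x) = l_j(e_j) t_j` and `f_0(x) = f_0(X) + ∑ t_j`. Since `f_0 - f_0(X)` is positive on the cone,
so is each `t_j`, and the cone becomes the open orthant; since `l_i(e_j) = 0` for `i ≠ j`, the
determinant of the forms times the Jacobian is `∏ l_j(e_j)` up to sign. The integral is therefore a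
Laplace integral of `∏ t_j ^ (α_j - 1)` against `φ = ∏_{r ∉ X} |f_r| ^ α_r`. Rescaling `t` by `λ⁻¹`
extracts the power of `λ`, and by dominated convergence `φ` is replaced by its value at the vertex,
which leaves a product of Gamma integrals.
-/

open scoped Pointwise Topology

section Orthant

variable {ι : Type*}

/-- The open positive orthant of `ι → ℝ`, the parameter domain of a simplicial cone. -/
def orthant (ι : Type*) : Set (ι → ℝ) := Set.univ.pi fun _ => Ioi 0

lemma mem_orthant {t : ι → ℝ} : t ∈ orthant ι ↔ ∀ i, 0 < t i := Set.mem_univ_pi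

lemma smul_orthant {r : ℝ} (hr : 0 < r) : r • orthant ι = orthant ι := by
  ext t
  simp only [Set.mem_smul_set_iff_inv_smul_mem₀ hr.ne', mem_orthant, Pi.smul_apply, smul_eq_mul,
    mul_pos_iff_of_pos_left (inv_pos.2 hr)]

lemma smul_mem_orthant {r : ℝ} (hr : 0 < r) {t : ι → ℝ} (ht : t ∈ orthant ι) :
    r • t ∈ orthant ι :=
  smul_orthant hr ▸ Set.smul_mem_smul_set ht

lemma measurableSet_orthant [Countable ι] : MeasurableSet (orthant ι) :=
  MeasurableSet.univ_pi fun _ => measurableSet_Ioi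

variable [Fintype ι]

lemma volume_restrict_orthant :
    (volume : Measure (ι → ℝ)).restrict (orthant ι) =
      Measure.pi fun _ => (volume : Measure ℝ).restrict (Ioi 0) := by
  rw [orthant, volume_pi, Measure.restrict_pi_pi]

lemma norm_le_sum_of_mem_orthant {t : ι → ℝ} (ht : t ∈ orthant ι) : ‖t‖ ≤ ∑ i, t i := by
  have hpos := fun i => (mem_orthant.1 ht i).le
  refine (pi_norm_le_iff_of_nonneg (Finset.sum_nonneg fun i _ => hpos i)).2 fun i => ?_
  rw [Real.norm_of_nonneg (hpos i)]
  exact Finset.single_le_sum (fun j _ => hpos j) (Finset.mem_univ i)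

lemma integrableOn_orthant_prod_exp_neg_mul_mul_rpow {a : ι → ℝ} (ha : ∀ i, 0 < a i) {b : ℝ}
    (hb : 0 < b) :
    IntegrableOn (fun t => ∏ i, Real.exp (-b * t i) * t i ^ (a i - 1)) (orthant ι) := by
  rw [IntegrableOn, volume_restrict_orthant]
  refine Integrable.fintype_prod (f := fun i s => Real.exp (-b * s) * s ^ (a i - 1)) fun i => ?_
  simpa only [Real.rpow_one, mul_comm, IntegrableOn] using
    integrableOn_rpow_mul_exp_neg_mul_rpow (s := a i - 1) (by linarith [ha i]) one_pos hb

lemma integral_orthant_prod_exp_neg_mul_rpow {a : ι → ℝ} (ha : ∀ i, 0 < a i) :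
    ∫ t in orthant ι, ∏ i, Real.exp (-t i) * t i ^ (a i - 1) = ∏ i, Real.Gamma (a i) := by
  rw [volume_restrict_orthant,
    integral_fintype_prod_eq_prod (f := fun i s => Real.exp (-s) * s ^ (a i - 1))]
  exact Finset.prod_congr rfl fun i _ => (Real.Gamma_eq_integral (ha i)).symm

end Orthant

section Watson

variable {ι E : Type*} [Fintype ι] [NormedAddCommGroup E]

lemma norm_comp_inv_smul_le_of_mem_orthant {φ : (ι → ℝ) → E} {A C : ℝ} (hC : 0 ≤ C)
    (hφ : ∀ t ∈ orthant ι, ‖φ t‖ ≤ C * Real.exp (A * ‖t‖)) {lam : ℝ} (hlam : 0 < lam)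
    (hA : 2 * A ≤ lam) {t : ι → ℝ} (ht : t ∈ orthant ι) :
    ‖φ (lam⁻¹ • t)‖ ≤ C * Real.exp ((∑ i, t i) / 2) := by
  have hA' : A * lam⁻¹ ≤ 1 / 2 := by
    rw [← div_eq_mul_inv, div_le_div_iff₀ hlam two_pos]
    linarith
  refine (hφ _ (smul_mem_orthant (inv_pos.2 hlam) ht)).trans ?_
  rw [norm_smul, norm_inv, Real.norm_of_nonneg hlam.le, ← mul_assoc]
  gcongr
  calc A * lam⁻¹ * ‖t‖ ≤ 1 / 2 * ‖t‖ := by gcongr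
    _ ≤ 1 / 2 * ∑ i, t i := by gcongr; exact norm_le_sum_of_mem_orthant ht
    _ = (∑ i, t i) / 2 := by ring

variable [NormedSpace ℝ E]

lemma rpow_sum_smul_integral_orthant_exp_neg_mul {a : ι → ℝ} (φ : (ι → ℝ) → E) {lam : ℝ}
    (hlam : 0 < lam) :
    lam ^ (∑ i, a i) •
        ∫ t in orthant ι, (∏ i, Real.exp (-lam * t i) * t i ^ (a i - 1)) • φ t =
      ∫ t in orthant ι, (∏ i, Real.exp (-t i) * t i ^ (a i - 1)) • φ (lam⁻¹ • t) := by
  have hscale := Measure.setIntegral_comp_smul_of_pos volume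
    (fun t : ι → ℝ => (∏ i, Real.exp (-(lam * t i)) * (lam * t i) ^ (a i - 1)) • φ t)
    (orthant ι) (inv_pos.2 hlam)
  simp only [Pi.smul_apply, smul_eq_mul, mul_inv_cancel_left₀ hlam.ne',
    smul_orthant (inv_pos.2 hlam)] at hscale
  rw [hscale, ← integral_smul, ← integral_smul]
  refine setIntegral_congr_fun measurableSet_orthant fun t ht => ?_
  have hweight (i : ι) : lam * (Real.exp (-(lam * t i)) * (lam * t i) ^ (a i - 1)) =
      lam ^ a i * (Real.exp (-lam * t i) * t i ^ (a i - 1)) := by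
    rw [Real.mul_rpow hlam.le (mem_orthant.1 ht i).le, Real.rpow_sub_one hlam.ne']
    field_simp
  simp only [smul_smul, Module.finrank_fintype_fun_eq_card, inv_pow, inv_inv,
    Real.rpow_sum_of_pos hlam, ← Finset.prod_mul_distrib, ← hweight]
  rw [Finset.prod_mul_distrib, Finset.prod_const, Finset.card_univ]

/-- The leading order of Watson's lemma on an orthant: rescaling `t` by `lam⁻¹` moves the parameter
into `φ`, after which dominated convergence applies. -/
theorem tendsto_rpow_sum_smul_integral_orthant [CompleteSpace E] {a : ι → ℝ} (ha : ∀ i, 0 < a i)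
    {φ : (ι → ℝ) → E} {y : E} {A : ℝ} (hmeas : StronglyMeasurable φ)
    (hgrowth : φ =O[𝓟 (orthant ι)] fun t => Real.exp (A * ‖t‖))
    (hlim : Tendsto φ (𝓝[orthant ι] 0) (𝓝 y)) :
    Tendsto (fun lam : ℝ => lam ^ (∑ i, a i) •
        ∫ t in orthant ι, (∏ i, Real.exp (-lam * t i) * t i ^ (a i - 1)) • φ t)
      atTop (𝓝 ((∏ i, Real.Gamma (a i)) • y)) := by
  obtain ⟨C, hC, hbound⟩ := hgrowth.exists_nonneg
  simp only [Asymptotics.isBigOWith_principal, Real.norm_eq_abs, Real.abs_exp] at hbound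
  refine Tendsto.congr' ((eventually_gt_atTop 0).mono fun lam hlam =>
    (rpow_sum_smul_integral_orthant_exp_neg_mul φ hlam).symm) ?_
  rw [← integral_orthant_prod_exp_neg_mul_rpow ha, ← integral_smul_const]
  refine tendsto_integral_filter_of_dominated_convergence
    (fun t => C * ∏ i, Real.exp (-(1 / 2) * t i) * t i ^ (a i - 1)) ?_ ?_ ?_ ?_
  · refine Eventually.of_forall fun lam => StronglyMeasurable.aestronglyMeasurable ?_
    have hweight : Measurable fun t : ι → ℝ => ∏ i, Real.exp (-t i) * t i ^ (a i - 1) := by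
      fun_prop
    exact hweight.stronglyMeasurable.smul (hmeas.comp_measurable (measurable_const_smul _))
  · filter_upwards [eventually_gt_atTop 0, eventually_ge_atTop (2 * A)] with lam hlam hA
    filter_upwards [ae_restrict_mem measurableSet_orthant] with t ht
    have hpos := mem_orthant.1 ht
    have hsplit : ∏ i, Real.exp (-(1 / 2) * t i) * t i ^ (a i - 1) =
        (∏ i, Real.exp (-t i) * t i ^ (a i - 1)) * Real.exp ((∑ i, t i) / 2) := by
      rw [Finset.sum_div, Real.exp_sum, ← Finset.prod_mul_distrib]
      refine Finset.prod_congr rfl fun i _ => ?_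
      rw [mul_right_comm, ← Real.exp_add]
      ring_nf
    have hnonneg : 0 ≤ ∏ i, Real.exp (-t i) * t i ^ (a i - 1) :=
      Finset.prod_nonneg fun i _ => by have := hpos i; positivity
    rw [hsplit, norm_smul, Real.norm_of_nonneg hnonneg, mul_left_comm]
    gcongr
    exact norm_comp_inv_smul_le_of_mem_orthant hC hbound hlam hA ht
  · exact (integrableOn_orthant_prod_exp_neg_mul_mul_rpow ha one_half_pos).const_mul C
  · filter_upwards [ae_restrict_mem measurableSet_orthant] with t ht
    refine Tendsto.const_smul (hlim.comp (tendsto_nhdsWithin_iff.2 ⟨?_, ?_⟩)) _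
    · simpa only [zero_smul] using (tendsto_inv_atTop_zero (𝕜 := ℝ)).smul_const t
    · filter_upwards [eventually_gt_atTop 0] with lam hlam
      exact smul_mem_orthant (inv_pos.2 hlam) ht

end Watson

section Affine

lemma affineMap_isBigO_exp_norm {V W : Type*} [NormedAddCommGroup V] [NormedSpace ℝ V]
    [FiniteDimensional ℝ V] [NormedAddCommGroup W] [NormedSpace ℝ W] (g : V →ᵃ[ℝ] W) :
    g =O[⊤] fun v => Real.exp ‖v‖ := by
  have hlinear : (fun v => g.linear v) =O[⊤] fun v => Real.exp ‖v‖ :=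
    ((LinearMap.toContinuousLinearMap g.linear).isBigO_id ⊤).trans <|
      Asymptotics.isBigO_of_le _ fun v => by
        rw [Real.norm_of_nonneg (Real.exp_nonneg _)]
        linarith [Real.add_one_le_exp ‖v‖]
  have hconst : (fun _ : V => g 0) =O[⊤] fun v => Real.exp ‖v‖ :=
    (Asymptotics.isBigO_const_const (g 0) (one_ne_zero (α := ℝ)) ⊤).trans <|
      Asymptotics.isBigO_of_le _ fun v => by
        rw [norm_one, Real.norm_of_nonneg (Real.exp_nonneg _)]
        exact Real.one_le_exp (norm_nonneg v)
  rw [g.decomp]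
  exact hlinear.add hconst

lemma prod_abs_affineMap_rpow_isBigO_exp {κ V : Type*} [NormedAddCommGroup V] [NormedSpace ℝ V]
    [FiniteDimensional ℝ V] (g : κ → V →ᵃ[ℝ] ℝ) {R : Finset κ} {β : κ → ℝ}
    (hβ : ∀ r ∈ R, 0 ≤ β r) :
    (fun v => ∏ r ∈ R, |g r v| ^ β r) =O[⊤] fun v => Real.exp ((∑ r ∈ R, β r) * ‖v‖) := by
  simp only [Finset.sum_mul, Real.exp_sum]
  refine Asymptotics.IsBigO.finsetProd fun r hr => ?_
  simpa only [mul_comm (β r), Real.exp_mul] using (affineMap_isBigO_exp_norm (g r)).abs_left.rpow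
    (hβ r hr) (Eventually.of_forall fun v => Real.exp_nonneg _)

lemma setIntegral_eq_abs_det_smul_setIntegral_preimage {V E : Type*} [NormedAddCommGroup V]
    [NormedSpace ℝ V] [FiniteDimensional ℝ V] [MeasurableSpace V] [BorelSpace V] (μ : Measure V)
    [μ.IsAddHaarMeasure] [NormedAddCommGroup E] [NormedSpace ℝ E] {Ψ : V →ᵃ[ℝ] V}
    (hdet : LinearMap.det Ψ.linear ≠ 0) (s : Set V) (F : V → E) :
    ∫ x in s, F x ∂μ = |LinearMap.det Ψ.linear| • ∫ t in Ψ ⁻¹' s, F (Ψ t) ∂μ := by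
  have hlinear : MeasurableEmbedding Ψ.linear :=
    (Ψ.linear.equivOfDetNeZero hdet).toContinuousLinearEquiv.toHomeomorph.measurableEmbedding
  have hmap : μ.map Ψ = ENNReal.ofReal |(LinearMap.det Ψ.linear)⁻¹| • μ := by
    have hΨ : (Ψ : V → V) = (fun x => x + Ψ 0) ∘ Ψ.linear := Ψ.decomp
    rw [hΨ, ← Measure.map_map (by fun_prop) hlinear.measurable,
      Measure.map_linearMap_addHaar_eq_smul_addHaar μ hdet, Measure.map_smul,
      map_add_right_eq_self]
  have hemb : MeasurableEmbedding Ψ := by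
    rw [Ψ.decomp]
    exact (measurableEmbedding_addRight (Ψ 0)).comp hlinear
  rw [← hemb.setIntegral_map, hmap, Measure.restrict_smul, integral_smul_measure,
    ENNReal.toReal_ofReal (abs_nonneg _), abs_inv, smul_inv_smul₀ (abs_ne_zero.2 hdet)]

end Affine

section Cone

variable {ι V : Type*} [AddCommGroup V] [Module ℝ V]

lemma affineMap_apply_add {W : Type*} [AddCommGroup W] [Module ℝ W] (g : V →ᵃ[ℝ] W) (x v : V) :
    g (x + v) = g x + g.linear v := by
  simpa only [vadd_eq_add, add_comm] using g.map_vadd x v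

lemma connectedComponentIn_affineMap_ne_zero [TopologicalSpace V] [ContinuousAdd V]
    [ContinuousSMul ℝ V] {g : ι → V →ᵃ[ℝ] ℝ} (hg : ∀ i, Continuous (g i)) {y : V}
    (hy : ∀ i, g i y ≠ 0) :
    connectedComponentIn {z | ∀ i, g i z ≠ 0} y = {x | ∀ i, 0 < g i x * g i y} := by
  have hconvex : Convex ℝ {x | ∀ i, 0 < g i x * g i y} := by
    have hset : {x | ∀ i, 0 < g i x * g i y} = ⋂ i, (g i y • g i) ⁻¹' Ioi 0 := by
      ext x
      simp [mul_comm]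
    rw [hset]
    exact convex_iInter fun i => (convex_Ioi 0).affine_preimage _
  refine Set.Subset.antisymm (fun x hx i => ?_) ?_
  · by_contra! hneg
    obtain ⟨z, hz, hz0⟩ := isPreconnected_connectedComponentIn.intermediate_value hx
      (mem_connectedComponentIn hy) ((hg i).mul continuous_const).continuousOn
      ⟨hneg, (mul_self_pos.2 (hy i)).le⟩
    exact mul_ne_zero (connectedComponentIn_subset _ _ hz i) (hy i) hz0
  · exact hconvex.isPreconnected.subset_connectedComponentIn (fun i => mul_self_pos.2 (hy i))
      fun x hx i => left_ne_zero_of_mul (hx i).ne'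

/-- The vectors `b i` direct the edges of the cones cut out by the affine forms `g i`, and are
normalized by `f0 (b i) = 1`: every form but the `i`-th is constant along `b i`. -/
structure IsEdgeFrame (g : ι → V →ᵃ[ℝ] ℝ) (f0 : V →ₗ[ℝ] ℝ) (b : ι → V) : Prop where
  linear_eq_zero : ∀ i j, i ≠ j → (g i).linear (b j) = 0
  map_eq_one : ∀ i, f0 (b i) = 1

/-- The open cone cut out by the affine forms `g i` into which the vectors `b i` point. -/
def simplicialCone (g : ι → V →ᵃ[ℝ] ℝ) (b : ι → V) : Set V :=
  {x | ∀ i, 0 < g i x * (g i).linear (b i)}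

variable {g : ι → V →ᵃ[ℝ] ℝ} {f0 : V →ₗ[ℝ] ℝ} {b : ι → V}

/- Otherwise the ray `y - s • b i`, `s ≥ 0`, would stay in the cone, and `f0` would not be bounded
below there. -/
lemma IsEdgeFrame.apply_mul_linear_pos (hb : IsEdgeFrame g f0 b) {y : V} (hy : ∀ i, g i y ≠ 0)
    {m : ℝ} (hm : ∀ z, (∀ i, 0 < g i z * g i y) → m < f0 z) (i : ι) :
    0 < g i y * (g i).linear (b i) := by
  by_contra! hneg
  have hmy : m < f0 y := hm y fun j => mul_self_pos.2 (hy j)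
  have hz : m < f0 (y + (-(f0 y - m)) • b i) := by
    refine hm _ fun j => ?_
    rw [affineMap_apply_add, map_smul, smul_eq_mul]
    have hsq := mul_self_pos.2 (hy j)
    rcases eq_or_ne j i with rfl | hji
    · nlinarith [mul_nonpos_of_nonneg_of_nonpos (sub_pos.2 hmy).le hneg]
    · rwa [hb.linear_eq_zero j i hji, mul_zero, add_zero]
  rw [map_add, map_smul, hb.map_eq_one, smul_eq_mul, mul_one] at hz
  linarith

lemma connectedComponentIn_eq_simplicialCone [TopologicalSpace V] [ContinuousAdd V]
    [ContinuousSMul ℝ V] (hg : ∀ i, Continuous (g i)) {y : V}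
    (hpos : ∀ i, 0 < g i y * (g i).linear (b i)) :
    connectedComponentIn {z | ∀ i, g i z ≠ 0} y = simplicialCone g b := by
  rw [connectedComponentIn_affineMap_ne_zero hg fun i => left_ne_zero_of_mul (hpos i).ne']
  ext x
  refine forall_congr' fun i => ?_
  rcases mul_pos_iff.1 (hpos i) with ⟨hgy, hlin⟩ | ⟨hgy, hlin⟩
  · rw [mul_pos_iff_of_pos_right hgy, mul_pos_iff_of_pos_right hlin]
  · rw [← neg_mul_neg (g i x), ← neg_mul_neg (g i x) ((g i).linear (b i)),
      mul_pos_iff_of_pos_right (neg_pos.2 hgy), mul_pos_iff_of_pos_right (neg_pos.2 hlin)]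

variable [Fintype ι]

/-- The affine parametrization `t ↦ X + ∑ i, t i • b i` of a simplicial cone with vertex `X` and
edge directions `b`. -/
def edgeParam (X : V) (b : ι → V) : (ι → ℝ) →ᵃ[ℝ] V :=
  (Fintype.linearCombination ℝ b).toAffineMap + AffineMap.const ℝ (ι → ℝ) X

lemma edgeParam_linear (X : V) : (edgeParam X b).linear = Fintype.linearCombination ℝ b := by
  simp [edgeParam]

lemma edgeParam_apply (X : V) (t : ι → ℝ) : edgeParam X b t = X + ∑ i, t i • b i := by
  simp [edgeParam, Fintype.linearCombination_apply, add_comm]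

namespace IsEdgeFrame

lemma map_edgeParam (hb : IsEdgeFrame g f0 b) (X : V) (t : ι → ℝ) :
    f0 (edgeParam X b t) = f0 X + ∑ i, t i := by
  simp only [edgeParam_apply, map_add, map_sum, map_smul, hb.map_eq_one, smul_eq_mul, mul_one]

lemma apply_edgeParam (hb : IsEdgeFrame g f0 b) {X : V} {i : ι} (hX : g i X = 0) (t : ι → ℝ) :
    g i (edgeParam X b t) = t i * (g i).linear (b i) := by
  rw [edgeParam_apply, affineMap_apply_add, hX, zero_add, map_sum,
    Finset.sum_eq_single_of_mem i (Finset.mem_univ i) fun j _ hji => by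
      rw [map_smul, hb.linear_eq_zero i j hji.symm, smul_zero],
    map_smul, smul_eq_mul]

lemma edgeParam_preimage_simplicialCone (hb : IsEdgeFrame g f0 b) {X : V} (hX : ∀ i, g i X = 0)
    (hc : ∀ i, (g i).linear (b i) ≠ 0) :
    edgeParam X b ⁻¹' simplicialCone g b = orthant ι := by
  ext t
  simp only [Set.mem_preimage, simplicialCone, Set.mem_ofPred_eq, mem_orthant,
    hb.apply_edgeParam (hX _), mul_assoc, mul_pos_iff_of_pos_right (mul_self_pos.2 (hc _))]

end IsEdgeFrame

end Cone

section Jacobian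

variable {ι : Type*} [Fintype ι] [DecidableEq ι]

/-- The matrix whose rows are the linear parts of the affine forms `g i`, in the standard
coordinates. -/
def linearMatrix (g : ι → (ι → ℝ) →ᵃ[ℝ] ℝ) : Matrix ι ι ℝ :=
  Matrix.of fun i c => (g i).linear (Pi.single c 1)

lemma IsEdgeFrame.det_linearMatrix_mul_det {g : ι → (ι → ℝ) →ᵃ[ℝ] ℝ} {f0 : (ι → ℝ) →ₗ[ℝ] ℝ}
    {b : ι → ι → ℝ} (hb : IsEdgeFrame g f0 b) :
    (linearMatrix g).det * LinearMap.det (Fintype.linearCombination ℝ b) =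
      ∏ i, (g i).linear (b i) := by
  have hmatrix : linearMatrix g = LinearMap.toMatrix' (LinearMap.pi fun i => (g i).linear) := by
    ext i c
    simp [linearMatrix, LinearMap.toMatrix'_apply]
  have hdiag : (LinearMap.pi fun i => (g i).linear) ∘ₗ Fintype.linearCombination ℝ b =
      Matrix.toLin' (Matrix.diagonal fun i => (g i).linear (b i)) := by
    ext j i
    rcases eq_or_ne i j with rfl | hij
    · simp
    · simp [hb.linear_eq_zero i j hij, hij]
  rw [hmatrix, LinearMap.det_toMatrix', ← LinearMap.det_comp, hdiag, LinearMap.det_toLin',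
    Matrix.det_diagonal]

end Jacobian

section ConeIntegral

variable {ι : Type*} [Fintype ι] {g : ι → (ι → ℝ) →ᵃ[ℝ] ℝ} {f0 : (ι → ℝ) →ₗ[ℝ] ℝ}
  {b : ι → ι → ℝ} {X : ι → ℝ}

lemma isEquivalent_rpow_neg_mul_of_tendsto {u : ℝ → ℝ} {s c : ℝ} (hc : c ≠ 0)
    (hu : Tendsto (fun lam => lam ^ s * u lam) atTop (𝓝 c)) :
    Asymptotics.IsEquivalent atTop u fun lam => lam ^ (-s) * c := by
  have hequiv := (Asymptotics.IsEquivalent.refl (u := fun lam : ℝ => lam ^ (-s))).mul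
    ((Asymptotics.isEquivalent_const_iff_tendsto hc).2 hu)
  refine hequiv.congr_left ((eventually_gt_atTop 0).mono fun lam hlam => ?_)
  simp only [Pi.mul_apply]
  rw [← mul_assoc, ← Real.rpow_add hlam, neg_add_cancel, Real.rpow_zero, one_mul]

theorem isEquivalent_integral_orthant_edgeParam {κ : Type*} (h : κ → (ι → ℝ) →ᵃ[ℝ] ℝ)
    {R : Finset κ} {β : κ → ℝ} (hβ : ∀ r ∈ R, 0 ≤ β r) (hR : ∀ r ∈ R, h r X ≠ 0) {a : ι → ℝ}
    (ha : ∀ i, 0 < a i) (b : ι → ι → ℝ) :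
    Asymptotics.IsEquivalent atTop
      (fun lam : ℝ => ∫ t in orthant ι, (∏ i, Real.exp (-lam * t i) * t i ^ (a i - 1)) *
        ∏ r ∈ R, |h r (edgeParam X b t)| ^ β r)
      (fun lam : ℝ => lam ^ (-∑ i, a i) *
        ((∏ i, Real.Gamma (a i)) * ∏ r ∈ R, |h r X| ^ β r)) := by
  have hcont : Continuous fun t => ∏ r ∈ R, |h r (edgeParam X b t)| ^ β r := by
    refine continuous_finsetProd _ fun r hr => Continuous.rpow_const ?_ fun _ => Or.inr (hβ r hr)
    exact ((h r).comp (edgeParam X b)).continuous_of_finiteDimensional.abs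
  have hgrowth := prod_abs_affineMap_rpow_isBigO_exp (fun r => (h r).comp (edgeParam X b)) hβ
  have hlim := (hcont.tendsto 0).mono_left (nhdsWithin_le_nhds (s := orthant ι))
  simp only [edgeParam_apply X (0 : ι → ℝ), Pi.zero_apply, zero_smul, Finset.sum_const_zero,
    add_zero] at hlim
  refine isEquivalent_rpow_neg_mul_of_tendsto (mul_ne_zero ?_ ?_) <|
    tendsto_rpow_sum_smul_integral_orthant ha hcont.stronglyMeasurable (hgrowth.mono le_top) hlim
  · exact (Finset.prod_pos fun i _ => Real.Gamma_pos_of_pos (ha i)).ne'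
  · exact Finset.prod_ne_zero_iff.2 fun r hr => (Real.rpow_pos_of_pos (abs_pos.2 (hR r hr)) _).ne'

variable [DecidableEq ι]

lemma abs_mul_abs_mul_rpow_mul_inv {c t : ℝ} (hc : c ≠ 0) (ht : 0 < t) (a : ℝ) :
    |c| * (|t * c| ^ a * |t * c|⁻¹) = |c| ^ a * t ^ (a - 1) := by
  have hc' := abs_pos.2 hc
  rw [abs_mul, abs_of_pos ht, Real.mul_rpow ht.le hc'.le, Real.rpow_sub_one ht.ne']
  field_simp

theorem IsEdgeFrame.abs_det_mul_setIntegral_simplicialCone (hb : IsEdgeFrame g f0 b)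
    (hX : ∀ i, g i X = 0) (hc : ∀ i, (g i).linear (b i) ≠ 0) (a : ι → ℝ) (φ : (ι → ℝ) → ℝ)
    (lam : ℝ) :
    |(linearMatrix g).det| * ∫ x in simplicialCone g b,
        Real.exp (-lam * f0 x) * (∏ i, |g i x| ^ a i) * (∏ i, |g i x|)⁻¹ * φ x =
      Real.exp (-lam * f0 X) * (∏ i, |(g i).linear (b i)| ^ a i) *
        ∫ t in orthant ι, (∏ i, Real.exp (-lam * t i) * t i ^ (a i - 1)) *
          φ (edgeParam X b t) := by
  have hdet : (linearMatrix g).det * LinearMap.det (edgeParam X b).linear =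
      ∏ i, (g i).linear (b i) := by rw [edgeParam_linear, hb.det_linearMatrix_mul_det]
  have hjac : LinearMap.det (edgeParam X b).linear ≠ 0 :=
    right_ne_zero_of_mul (hdet.trans_ne (Finset.prod_ne_zero_iff.2 fun i _ => hc i))
  rw [setIntegral_eq_abs_det_smul_setIntegral_preimage volume hjac, smul_eq_mul, ← mul_assoc,
    ← abs_mul, hdet, hb.edgeParam_preimage_simplicialCone hX hc, ← integral_const_mul,
    ← integral_const_mul]
  refine setIntegral_congr_fun measurableSet_orthant fun t ht => ?_
  have hexp : Real.exp (-lam * f0 (edgeParam X b t)) =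
      Real.exp (-lam * f0 X) * ∏ i, Real.exp (-lam * t i) := by
    rw [hb.map_edgeParam, mul_add, Finset.mul_sum, Real.exp_add, Real.exp_sum]
  have hweights : (∏ i, |(g i).linear (b i)|) *
      ((∏ i, |t i * (g i).linear (b i)| ^ a i) * (∏ i, |t i * (g i).linear (b i)|)⁻¹) =
      (∏ i, |(g i).linear (b i)| ^ a i) * ∏ i, t i ^ (a i - 1) := by
    simp only [← Finset.prod_inv_distrib, ← Finset.prod_mul_distrib]
    exact Finset.prod_congr rfl fun i _ =>
      abs_mul_abs_mul_rpow_mul_inv (hc i) (mem_orthant.1 ht i) (a i)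
  simp only [hexp, hb.apply_edgeParam (hX _), Finset.abs_prod, Finset.prod_mul_distrib]
  linear_combination (Real.exp (-lam * f0 X) * (∏ i, Real.exp (-lam * t i)) *
    φ (edgeParam X b t)) * hweights

theorem IsEdgeFrame.isEquivalent_setIntegral_simplicialCone (hb : IsEdgeFrame g f0 b)
    (hX : ∀ i, g i X = 0) (hc : ∀ i, (g i).linear (b i) ≠ 0) {a : ι → ℝ} (ha : ∀ i, 0 < a i)
    {κ : Type*} (h : κ → (ι → ℝ) →ᵃ[ℝ] ℝ) {R : Finset κ} {β : κ → ℝ} (hβ : ∀ r ∈ R, 0 ≤ β r)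
    (hR : ∀ r ∈ R, h r X ≠ 0) :
    Asymptotics.IsEquivalent atTop
      (fun lam : ℝ => |(linearMatrix g).det| * ∫ x in simplicialCone g b,
        Real.exp (-lam * f0 x) * (∏ i, |g i x| ^ a i) * (∏ i, |g i x|)⁻¹ *
          ∏ r ∈ R, |h r x| ^ β r)
      (fun lam : ℝ => Real.exp (-lam * f0 X) * lam ^ (-∑ i, a i) *
        ((∏ i, Real.Gamma (a i) * |(g i).linear (b i)| ^ a i) * ∏ r ∈ R, |h r X| ^ β r)) := by
  simp only [hb.abs_det_mul_setIntegral_simplicialCone hX hc]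
  refine (Asymptotics.IsEquivalent.refl.mul
    (isEquivalent_integral_orthant_edgeParam h hβ hR ha b)).congr_right ?_
  refine Eventually.of_forall fun lam => ?_
  simp only [Pi.mul_apply, Finset.prod_mul_distrib]
  ring

end ConeIntegral

section Arrangement

variable {f : Fin N → (Fin k → ℝ) →ᵃ[ℝ] ℝ} {f0 : (Fin k → ℝ) →ₗ[ℝ] ℝ} {S : Finset (Fin N)}

lemma Generic.apply_ne_zero_of_notMem (hf : Generic f) {X : Fin k → ℝ} (hX : IsVertexOf f S X)
    {r : Fin N} (hr : r ∉ S) : f r X ≠ 0 := fun hrX =>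
  hf.2.2 (insert r S) (by rw [Finset.card_insert_of_notMem hr, hX.1])
    ⟨X, (Finset.forall_mem_insert ..).2 ⟨hrX, hX.2⟩⟩

lemma isEdgeFrame_comp_equiv {e : Fin N → Fin k → ℝ}
    (he : ∀ j ∈ S, (∀ i ∈ S.erase j, (f i).linear (e j) = 0) ∧ f0 (e j) = 1) {ι : Type*}
    (σ : ι ≃ S) : IsEdgeFrame (fun i => f (σ i)) f0 (fun i => e (σ i)) where
  linear_eq_zero i j hij := (he _ (σ j).2).1 _ <|
    Finset.mem_erase.2 ⟨fun h => hij (σ.injective (Subtype.ext h)), (σ i).2⟩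
  map_eq_one i := (he _ (σ i).2).2

lemma IsPosCone.linear_ne_zero_and_eq_simplicialCone {X : Fin k → ℝ} {C : Set (Fin k → ℝ)}
    (hC : IsPosCone f f0 S X C) {ι : Type*} (σ : ι ≃ S) {b : ι → Fin k → ℝ}
    (hb : IsEdgeFrame (fun i => f (σ i)) f0 b) :
    (∀ i, (f (σ i)).linear (b i) ≠ 0) ∧ C = simplicialCone (fun i => f (σ i)) b := by
  obtain ⟨⟨y, hy, rfl⟩, hpos⟩ := hC
  have hcont (j : Fin N) : Continuous (f j) := (f j).continuous_of_finiteDimensional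
  have hforall (p : Fin N → Prop) : (∀ j ∈ S, p j) ↔ ∀ i, p (σ i) := by
    rw [σ.forall_congr_left, Subtype.forall]
    simp
  simp only [hforall fun j => f j _ ≠ 0] at hy hpos ⊢
  have hsign := hb.apply_mul_linear_pos hy fun z hz => hpos z <| by
    rwa [connectedComponentIn_affineMap_ne_zero (fun i => hcont (σ i)) hy]
  exact ⟨fun i => right_ne_zero_of_mul (hsign i).ne',
    connectedComponentIn_eq_simplicialCone (fun i => hcont (σ i)) hsign⟩

end Arrangement

theorem stmt_2_general {k N : ℕ} (f : Fin N → (Fin k → ℝ) →ᵃ[ℝ] ℝ) (f0 : (Fin k → ℝ) →ₗ[ℝ] ℝ)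
    {S : Finset (Fin N)} (σ : Fin k ≃ S) {α : Fin N → ℝ} (hα : ∀ j ∈ S, 0 < α j)
    (hα' : ∀ r ∉ S, 0 ≤ α r) {X : Fin k → ℝ} (hX : ∀ j ∈ S, f j X = 0)
    (hX' : ∀ r ∉ S, f r X ≠ 0) {C : Set (Fin k → ℝ)} (hC : IsPosCone f f0 S X C)
    {e : Fin N → Fin k → ℝ}
    (he : ∀ j ∈ S, (∀ i ∈ S.erase j, (f i).linear (e j) = 0) ∧ f0 (e j) = 1) :
    Asymptotics.IsEquivalent atTop
      (fun lam : ℝ => ∫ x in C, Real.exp (-lam * f0 x) * (∏ j, |f j x| ^ α j) *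
        |(linearMatrix fun i => f (σ i)).det| * (∏ j ∈ S, |f j x|)⁻¹)
      (fun lam : ℝ => Real.exp (-lam * f0 X) * lam ^ (-(∑ j ∈ S, α j)) *
        ((∏ j ∈ S, Real.Gamma (α j) * |(f j).linear (e j)| ^ α j) *
          ∏ j ∈ Sᶜ, |f j X| ^ α j)) := by
  have hb := isEdgeFrame_comp_equiv he σ
  obtain ⟨hc, rfl⟩ := hC.linear_ne_zero_and_eq_simplicialCone σ hb
  have hprod (F : Fin N → ℝ) : ∏ j ∈ S, F j = ∏ i, F (σ i) := by
    rw [← Finset.prod_coe_sort, ← σ.prod_comp]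
  have hsum : ∑ j ∈ S, α j = ∑ i, α (σ i) := by rw [← Finset.sum_coe_sort, ← σ.sum_comp]
  have hasymp := hb.isEquivalent_setIntegral_simplicialCone (fun i => hX _ (σ i).2) hc
    (fun i => hα _ (σ i).2) f (fun r hr => hα' r (Finset.mem_compl.1 hr))
    fun r hr => hX' r (Finset.mem_compl.1 hr)
  simp only [← integral_const_mul] at hasymp
  simp only [← Finset.prod_mul_prod_compl S fun j => |f j _| ^ α j, hprod, hsum]
  exact hasymp.congr_left <| Eventually.of_forall fun lam =>
    integral_congr_ae <| Eventually.of_forall fun x => by ring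

/-- as `λ → +∞` along the real axis, the hypergeometric integral over the
cone `C⁺_X` is asymptotically equivalent to
`e^{-λ f0 X} λ^{-α_X} ∏_{j ∈ X} Γ(α j) |l j (e_{X∖{j}})| ^ α j ∏_{r ∉ X} |f r X| ^ α r`. -/
theorem stmt_2 {k N : ℕ} (hk : 1 ≤ k) (hkN : k ≤ N)
    (f : Fin N → ((Fin k → ℝ) →ᵃ[ℝ] ℝ)) (hf : Generic f)
    (f0 : (Fin k → ℝ) →ₗ[ℝ] ℝ) (hf0 : GenericLin f f0)
    (α : Fin N → ℝ) (hα : ∀ j, 0 < α j)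
    (Sx : Finset (Fin N)) (hcard : Sx.card = k) (X : Fin k → ℝ)
    (hX : IsVertexOf f Sx X)
    (Cx : Set (Fin k → ℝ)) (hCx : IsPosCone f f0 Sx X Cx)
    (e : Fin N → (Fin k → ℝ))
    (he : ∀ j ∈ Sx, (∀ i ∈ Sx.erase j, (f i).linear (e j) = 0) ∧ f0 (e j) = 1)
    (dAbs : ℝ)
    (hd : dAbs = |(Matrix.of fun i c : Fin k =>
      (f ((Sx.orderIsoOfFin hcard i : Sx) : Fin N)).linear (Pi.single c 1)).det|) :
    Asymptotics.IsEquivalent atTop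
      (fun lam : ℝ => ∫ x in Cx,
        Real.exp (-lam * f0 x) * (∏ j, |f j x| ^ α j) * dAbs * (∏ j ∈ Sx, |f j x|)⁻¹)
      (fun lam : ℝ => Real.exp (-lam * f0 X) * lam ^ (-(∑ j ∈ Sx, α j)) *
        ((∏ j ∈ Sx, Real.Gamma (α j) * |(f j).linear (e j)| ^ α j) *
          ∏ j ∈ Sxᶜ, |f j X| ^ α j)) := by
  subst hd
  exact stmt_2_general f f0 (Sx.orderIsoOfFin hcard).toEquiv (fun j _ => hα j)
    (fun j _ => (hα j).le) hX.2 (fun _ => hf.apply_ne_zero_of_notMem hX) hCx he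

end HypArr
end
end

section
/- For every arrangement domain Δ ∈ 𝒟⁺, each function λ ↦ I_{Δ,X}(λ) is holomorphic on the half-plane {Re λ > 0}, and the vector I_Δ(λ) = (I_{Δ,X}(λ))_{X∈𝒳} satisfies the linear ordinary differential equation I_Δ'(λ) = −(𝒜 + λ^{−1} ℬ) I_Δ(λ), where the matrices 𝒜 and ℬ, indexed by pairs of vertices, are given by: 𝒜 is diagonal with 𝒜_{X,X} = f_0(X); ℬ_{X,X} = α_X; ℬ_{X,Y} = 0 whenever X ≠ Y and the index sets of X and Y share fewer than k−1 elements; and ℬ_{X,Y} = sgn(l_j(e_U) · l_r(e_U)) · α_r whenever U = X∩Y has exactly k−1 elements, {j} = X∖Y and {r} = Y∖X. -/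
open Set MeasureTheory Filter
open scoped Classical Real

noncomputable section

namespace HypArr

variable {k N : ℕ}

/-
Fix a vertex `X` with index set `S`. Differentiating under the integral sign brings down `-f0`, and
in the affine coordinates `(f j)_{j ∈ S}` one has `f0 = f0 X + ∑ j ∈ S, f j / l_j(e_j)`, where
`e_j` directs the line `L_{S ∖ {j}}` and `f0 e_j = 1`. The constant gives the matrix `𝒜`, and the
factor `f j` removes `j` from the denominator of the integrand. Along `e_j` the remaining
denominator is constant, so integration by parts replaces the integral for `S ∖ {j}` by `λ⁻¹` times
the sum over `r ∉ S ∖ {j}` of `α_r l_r(e_j)` times the integral for `(S ∖ {j}) ∪ {r}`: the term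
`r = j` gives the diagonal of `ℬ`, the other ones its entries between adjacent vertices, the sign
coming from Cramer's rule. There are no boundary terms because the master function vanishes on the
hyperplanes, and the integrals converge because `f0` grows linearly at infinity on `Δ`.
-/

section Exchange

variable {ι : Type*} [DecidableEq ι] {S : Finset ι} {j r : ι}

theorem inter_insert_erase (hr : r ∉ S) : S ∩ insert r (S.erase j) = S.erase j := by
  grind

theorem sdiff_insert_erase (hj : j ∈ S) (hr : r ∉ S) : S \ insert r (S.erase j) = {j} := by
  grind

theorem insert_erase_sdiff (hr : r ∉ S) : insert r (S.erase j) \ S = {r} := by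
  grind

theorem card_insert_erase (hj : j ∈ S) (hr : r ∉ S.erase j) :
    (insert r (S.erase j)).card = S.card := by
  rw [Finset.card_insert_of_notMem hr, Finset.card_erase_add_one hj]

theorem exists_eq_insert_erase {T : Finset ι} (hST : S ≠ T) (hcard : S.card = T.card)
    (hinter : S.card - 1 ≤ (S ∩ T).card) :
    ∃ j ∈ S, ∃ r ∉ S, T = insert r (S.erase j) := by
  have hlt : (S ∩ T).card < S.card :=
    Finset.card_lt_card (Finset.inter_subset_left.ssubset_of_ne fun h =>
      hST (Finset.eq_of_subset_of_card_le (Finset.inter_eq_left.1 h) hcard.ge))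
  have hS := Finset.card_sdiff_add_card_inter S T
  have hT := Finset.card_sdiff_add_card_inter T S
  rw [Finset.inter_comm] at hT
  obtain ⟨j, hj⟩ := Finset.card_eq_one.1 (show (S \ T).card = 1 by omega)
  obtain ⟨r, hr⟩ := Finset.card_eq_one.1 (show (T \ S).card = 1 by omega)
  refine ⟨j, ?_, r, ?_, ?_⟩
  · exact (Finset.mem_sdiff.1 (hj ▸ Finset.mem_singleton_self j)).1
  · exact (Finset.mem_sdiff.1 (hr ▸ Finset.mem_singleton_self r)).2
  · ext i
    have hij : i ∈ S \ T ↔ i = j := by rw [hj, Finset.mem_singleton]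
    have hir : i ∈ T \ S ↔ i = r := by rw [hr, Finset.mem_singleton]
    grind

theorem sum_eq_add_sum_exchange [Fintype ι] {M : Type*} [AddCommMonoid M] {k : ℕ}
    (S : {S : Finset ι // S.card = k}) (g : {S : Finset ι // S.card = k} → M) (c : ι → ι → M)
    (hfar : ∀ T, S ≠ T → (S.1 ∩ T.1).card < k - 1 → g T = 0)
    (hnear : ∀ T, ∀ j ∈ S.1, ∀ r ∉ S.1, T.1 = insert r (S.1.erase j) → g T = c j r) :
    ∑ T, g T = g S + ∑ j ∈ S.1, ∑ r ∈ S.1ᶜ, c j r := by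
  have hcard (j r : ι) (h : j ∈ S.1 ∧ r ∈ S.1ᶜ) : (insert r (S.1.erase j)).card = k := by
    rw [card_insert_erase h.1 (mt Finset.mem_of_mem_erase (Finset.mem_compl.1 h.2)), S.2]
  rw [← Finset.add_sum_erase _ _ (Finset.mem_univ S), ← Finset.sum_product']
  congr 1
  symm
  refine Finset.sum_bij_ne_zero
    (fun p hp _ => ⟨insert p.2 (S.1.erase p.1), hcard p.1 p.2 (Finset.mem_product.1 hp)⟩)
    ?_ ?_ ?_ ?_
  · simp only [Finset.mem_product, Finset.mem_compl, Finset.mem_erase, Finset.mem_univ, and_true]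
    exact fun p hp _ h => hp.2 (Subtype.ext_iff.1 h ▸ Finset.mem_insert_self _ _)
  · rintro ⟨j, r⟩ h - ⟨j', r'⟩ h' - heq
    rw [Finset.mem_product, Finset.mem_compl] at h h'
    have heq' : insert r (S.1.erase j) = insert r' (S.1.erase j') := Subtype.ext_iff.1 heq
    refine Prod.ext (Finset.singleton_injective ?_) (Finset.singleton_injective ?_)
    · rw [← sdiff_insert_erase h.1 h.2, heq', sdiff_insert_erase h'.1 h'.2]
    · rw [← insert_erase_sdiff h.2, heq', insert_erase_sdiff h'.2]
  · intro T hT hgT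
    have hST : S ≠ T := (Finset.ne_of_mem_erase hT).symm
    obtain ⟨j, hj, r, hr, hT⟩ := exists_eq_insert_erase (mt Subtype.ext hST)
      (S.2.trans T.2.symm) (by rw [S.2]; exact not_lt.1 (mt (hfar T hST) hgT))
    exact ⟨(j, r), Finset.mem_product.2 ⟨hj, Finset.mem_compl.2 hr⟩,
      by rwa [← hnear T j hj r hr hT], Subtype.ext hT.symm⟩
  · intro p hp _
    rw [Finset.mem_product, Finset.mem_compl] at hp
    exact (hnear _ p.1 hp.1 p.2 hp.2 rfl).symm

end Exchange

section Determinant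

variable {ι n R : Type*} [Fintype n] [DecidableEq n]

theorem det_updateRow_mul_dotProduct [CommRing R] (M : Matrix n n R) (a : n) (ρ v : n → R)
    (hv : ∀ i ≠ a, M i ⬝ᵥ v = 0) : (M.updateRow a ρ).det * (M a ⬝ᵥ v) = M.det * (ρ ⬝ᵥ v) := by
  have hMv : M.mulVec v = Pi.single a (M a ⬝ᵥ v) := by
    ext i
    rcases eq_or_ne i a with rfl | hi
    · simp [Matrix.mulVec]
    · simp [Matrix.mulVec, hv i hi, hi]
  have hadj : M.adjugate.mulVec (M.mulVec v) = M.det • v := by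
    rw [Matrix.mulVec_mulVec, Matrix.adjugate_mul, Matrix.smul_mulVec, Matrix.one_mulVec]
  have hdet : (M.updateRow a ρ).det = ρ ⬝ᵥ (fun c => M.adjugate c a) := by
    rw [Matrix.det_eq_sum_mul_adjugate_row _ a]
    simp [Matrix.adjugate_apply, dotProduct]
  calc (M.updateRow a ρ).det * (M a ⬝ᵥ v)
      = ρ ⬝ᵥ M.adjugate.mulVec (M.mulVec v) := by
        rw [hMv, hdet, Matrix.mulVec_single, dotProduct_smul, op_smul_eq_mul]
        rfl
    _ = M.det * (ρ ⬝ᵥ v) := by rw [hadj, dotProduct_smul, smul_eq_mul]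

variable [CommRing R] [LinearOrder R] [IsStrictOrderedRing R]

theorem abs_det_eq_of_range_subset (A : ι → n → R) {σ τ : n → ι}
    (hτ : Function.Injective τ) (h : range τ ⊆ range σ) :
    |(Matrix.of fun i => A (τ i)).det| = |(Matrix.of fun i => A (σ i)).det| := by
  choose p hp using fun i => h (mem_range_self i)
  have hinj : Function.Injective p := fun a b hab => hτ (by rw [← hp a, ← hp b, hab])
  let e := Equiv.ofBijective p (Finite.injective_iff_bijective.1 hinj)
  rw [← Matrix.abs_det_submatrix_equiv_equiv e (Equiv.refl n) (Matrix.of fun i => A (σ i))]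
  congr 3
  ext i c
  simp [e, hp]

theorem abs_det_insert_erase_mul [DecidableEq ι] (A : ι → n → R) {S : Finset ι} {j r : ι}
    (hj : j ∈ S) (σ : n ≃ S) (τ : n ≃ (insert r (S.erase j) : Finset ι))
    {v : n → R} (hv : ∀ i ∈ S.erase j, A i ⬝ᵥ v = 0) :
    |(Matrix.of fun i => A (τ i)).det| * |A j ⬝ᵥ v| =
      |(Matrix.of fun i => A (σ i)).det| * |A r ⬝ᵥ v| := by
  set a := σ.symm ⟨j, hj⟩ with ha
  have hσa : (σ a : ι) = j := by simp [ha]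
  set σ' : n → ι := Function.update (fun i => (σ i : ι)) a r
  have hrange : range (fun i => (τ i : ι)) ⊆ range σ' := by
    rintro _ ⟨i, rfl⟩
    obtain h | h := Finset.mem_insert.1 (τ i).2
    · exact ⟨a, by simp [σ', h]⟩
    · obtain ⟨hne, hS⟩ := Finset.mem_erase.1 h
      refine ⟨σ.symm ⟨τ i, hS⟩, ?_⟩
      have : σ.symm ⟨τ i, hS⟩ ≠ a := by simpa [ha, Subtype.ext_iff] using hne
      simp [σ', Function.update_of_ne this]
  have hupdate : Matrix.of (fun i => A (σ' i)) =
      (Matrix.of fun i => A (σ i)).updateRow a (A r) := by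
    ext i c
    rcases eq_or_ne i a with rfl | hi
    · simp [σ']
    · simp [σ', hi]
  have hτ : Function.Injective fun i => (τ i : ι) := Subtype.val_injective.comp τ.injective
  rw [abs_det_eq_of_range_subset A hτ hrange, hupdate, ← abs_mul, ← abs_mul, ← hσa]
  refine congrArg _ (det_updateRow_mul_dotProduct _ a (A r) v fun i hi => hv _ ?_)
  refine Finset.mem_erase.2 ⟨fun h => hi (σ.injective (Subtype.ext ?_)), (σ i).2⟩
  rw [h, hσa]

theorem sign_mul_abs (x : ℝ) : Real.sign x * |x| = x := by
  rcases lt_trichotomy x 0 with hx | rfl | hx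
  · rw [Real.sign_of_neg hx, abs_of_neg hx, neg_one_mul, neg_neg]
  · simp
  · rw [Real.sign_of_pos hx, abs_of_pos hx, one_mul]

theorem sign_mul_mul_eq_of_mul_abs_eq {a b D E : ℝ} (ha : a ≠ 0) (h : E * |a| = D * |b|) :
    Real.sign (a * b) * E = D * (a⁻¹ * b) := by
  have ha' := abs_ne_zero.2 ha
  calc Real.sign (a * b) * E = Real.sign (a * b) * (E * |a|) / |a| := by field_simp
    _ = D * (Real.sign (a * b) * |a * b|) / |a| ^ 2 := by rw [h, abs_mul]; field_simp
    _ = D * (a⁻¹ * b) := by rw [sign_mul_abs, sq_abs]; field_simp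

end Determinant

section AffineForm

variable {E : Type*} [NormedAddCommGroup E] [NormedSpace ℝ E]

theorem apply_add_smul (g : E →ᵃ[ℝ] ℝ) (x v : E) (t : ℝ) :
    g (x + t • v) = g x + t * g.linear v := by
  rw [add_comm, ← vadd_eq_add, g.map_vadd, map_smul, smul_eq_mul, vadd_eq_add, add_comm]

theorem exists_direction {ι : Type*} {f : ι → E →ᵃ[ℝ] ℝ} {f0 : E →ₗ[ℝ] ℝ} {U : Finset ι}
    (h : ∃ x y, (∀ j ∈ U, f j x = 0) ∧ (∀ j ∈ U, f j y = 0) ∧ f0 x ≠ f0 y) :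
    ∃ v, f0 v = 1 ∧ ∀ j ∈ U, (f j).linear v = 0 := by
  obtain ⟨x, y, hx, hy, hxy⟩ := h
  refine ⟨(f0 (x - y))⁻¹ • (x - y), ?_, fun j hj => ?_⟩
  · rw [map_smul, smul_eq_mul, inv_mul_cancel₀ (by rwa [map_sub, sub_ne_zero])]
  · have := (f j).linearMap_vsub x y
    rw [hx j hj, hy j hj, vsub_self, vsub_eq_sub] at this
    rw [map_smul, this, smul_zero]

theorem eq_zero_of_existsUnique {ι : Type*} {f : ι → E →ᵃ[ℝ] ℝ} {S : Finset ι}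
    (h : ∃! x, ∀ j ∈ S, f j x = 0) {z : E} (hz : ∀ j ∈ S, (f j).linear z = 0) : z = 0 := by
  obtain ⟨x, hx, hunique⟩ := h
  have : x + (1 : ℝ) • z = x :=
    hunique _ fun j hj => by rw [apply_add_smul, hx j hj, hz j hj, mul_zero, add_zero]
  simpa using this

variable [FiniteDimensional ℝ E]

theorem exists_abs_le_mul_norm_add_one (g : E →ᵃ[ℝ] ℝ) :
    ∃ K : ℝ, 0 < K ∧ ∀ x, |g x| ≤ K * (‖x‖ + 1) := by
  let L := LinearMap.toContinuousLinearMap g.linear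
  refine ⟨‖L‖ + |g 0| + 1, by positivity, fun x => ?_⟩
  calc |g x| = |L x + g 0| := congrArg _ (congrFun g.decomp x)
    _ ≤ ‖L‖ * ‖x‖ + |g 0| := (abs_add_le _ _).trans (by gcongr; exact L.le_opNorm x)
    _ ≤ (‖L‖ + |g 0| + 1) * (‖x‖ + 1) := by
      nlinarith [norm_nonneg x, norm_nonneg L, mul_nonneg (abs_nonneg (g 0)) (norm_nonneg x)]

theorem exists_unit_tendsto_inv_norm_mul {x : ℕ → E} (hx : Tendsto (fun n => ‖x n‖) atTop atTop) :
    ∃ u : E, ‖u‖ = 1 ∧ ∃ φ : ℕ → ℕ, StrictMono φ ∧ ∀ g : E →ᵃ[ℝ] ℝ,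
      Tendsto (fun n => ‖x (φ n)‖⁻¹ * g (x (φ n))) atTop (nhds (g.linear u)) := by
  have hsphere : ∀ᶠ n in atTop, ‖x n‖⁻¹ • x n ∈ Metric.sphere (0 : E) 1 := by
    filter_upwards [hx.eventually_gt_atTop 0] with n hn
    rw [mem_sphere_zero_iff_norm, norm_smul, norm_inv, norm_norm, inv_mul_cancel₀ hn.ne']
  obtain ⟨u, hu, φ, hφ, hlim⟩ :=
    (isCompact_sphere (0 : E) 1).tendsto_subseq' hsphere.frequently
  refine ⟨u, mem_sphere_zero_iff_norm.1 hu, φ, hφ, fun g => ?_⟩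
  have hlinear := ((LinearMap.continuous_of_finiteDimensional g.linear).tendsto u).comp hlim
  have hconst : Tendsto (fun n => ‖x (φ n)‖⁻¹ * g 0) atTop (nhds 0) := by
    simpa using ((hx.comp hφ.tendsto_atTop).inv_tendsto_atTop).mul_const (g 0)
  refine (add_zero (g.linear u) ▸ hlinear.add hconst).congr fun n => ?_
  rw [congrFun g.decomp (x (φ n))]
  simp [mul_add]

theorem ae_ne_zero [MeasurableSpace E] [BorelSpace E] (μ : Measure E) [μ.IsAddHaarMeasure]
    (g : E →ᵃ[ℝ] ℝ) {x₀ : E} (hx₀ : g x₀ ≠ 0) : ∀ᵐ x ∂μ, g x ≠ 0 := by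
  let H : AffineSubspace ℝ E := (AffineSubspace.mk' (0 : ℝ) ⊥).comap g
  have hH (x : E) : x ∈ H ↔ g x = 0 := by
    rw [AffineSubspace.mem_comap, AffineSubspace.mem_mk', Submodule.mem_bot, vsub_eq_zero_iff_eq]
  have hnull : μ H = 0 :=
    Measure.addHaar_affineSubspace μ H fun h => hx₀ ((hH x₀).1 (h ▸ AffineSubspace.mem_top ℝ E x₀))
  filter_upwards [measure_eq_zero_iff_ae_notMem.1 hnull] with x hx
  exact fun h => hx ((hH x).2 h)

end AffineForm

section Chamber

variable {ι E : Type*} [NormedAddCommGroup E] [NormedSpace ℝ E] {f : ι → E →ᵃ[ℝ] ℝ} {x₀ x : E}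

/-- The set of points on which every form of the family `f` has the sign it has at `x₀`: when no
form vanishes at `x₀`, this is the domain of the arrangement which contains `x₀`. -/
def chamber (f : ι → E →ᵃ[ℝ] ℝ) (x₀ : E) : Set E :=
  {x | ∀ j, 0 < f j x₀ * f j x}

theorem ne_zero_of_mem_chamber (hx : x ∈ chamber f x₀) (j : ι) : f j x ≠ 0 :=
  right_ne_zero_of_mul (hx j).ne'

theorem convex_chamber (f : ι → E →ᵃ[ℝ] ℝ) (x₀ : E) : Convex ℝ (chamber f x₀) := by
  have hpos (j : ι) : Convex ℝ {t : ℝ | 0 < f j x₀ * t} :=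
    convex_halfSpace_gt (LinearMap.mulLeft ℝ (f j x₀)).isLinear 0
  rw [chamber, ofPred_forall]
  exact convex_iInter fun j => (hpos j).affine_preimage (f j)

theorem add_smul_mem_chamber (hx : x ∈ chamber f x₀) {z : E}
    (hz : ∀ j, 0 ≤ f j x₀ * (f j).linear z) {t : ℝ} (ht : 0 ≤ t) :
    x + t • z ∈ chamber f x₀ := fun j => by
  rw [apply_add_smul, mul_add, mul_left_comm]
  exact add_pos_of_pos_of_nonneg (hx j) (mul_nonneg ht (hz j))

variable [FiniteDimensional ℝ E]

theorem connectedComponentIn_eq_chamber (hx₀ : ∀ j, f j x₀ ≠ 0) :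
    connectedComponentIn {x | ∀ j, f j x ≠ 0} x₀ = chamber f x₀ := by
  have hmem : x₀ ∈ {x | ∀ j, f j x ≠ 0} := hx₀
  apply Subset.antisymm
  · intro x hx j
    by_contra hneg
    have hcont : Continuous fun x => f j x₀ * f j x :=
      continuous_const.mul (f j).continuous_of_finiteDimensional
    have himage := (isPreconnected_connectedComponentIn (F := {x | ∀ j, f j x ≠ 0})
      (x := x₀)).image _ hcont.continuousOn
    obtain ⟨y, hy, hy0⟩ := himage.ordConnected.out (mem_image_of_mem _ hx)
      (mem_image_of_mem _ (mem_connectedComponentIn hmem))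
      ⟨not_lt.1 hneg, mul_self_nonneg (f j x₀)⟩
    exact mul_ne_zero (hx₀ j) (connectedComponentIn_subset _ _ hy j) hy0
  · exact (convex_chamber f x₀).isPreconnected.subset_connectedComponentIn
      (fun j => mul_self_pos.2 (hx₀ j)) fun x hx => ne_zero_of_mem_chamber hx

variable [Finite ι]

theorem isOpen_chamber (f : ι → E →ᵃ[ℝ] ℝ) (x₀ : E) : IsOpen (chamber f x₀) := by
  rw [chamber, ofPred_forall]
  exact isOpen_iInter_of_finite fun j =>
    isOpen_lt continuous_const (continuous_const.mul (f j).continuous_of_finiteDimensional)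

theorem exists_eq_zero_of_mem_frontier_chamber (hx₀ : ∀ j, f j x₀ ≠ 0)
    (hx : x ∈ frontier (chamber f x₀)) : ∃ j, f j x = 0 := by
  rw [(isOpen_chamber f x₀).frontier_eq] at hx
  by_contra! hne
  refine hx.2 fun j => lt_of_le_of_ne ?_ (mul_ne_zero (hx₀ j) (hne j)).symm
  exact closure_minimal (fun y (hy : y ∈ chamber f x₀) => (hy j).le)
    (isClosed_le continuous_const (continuous_const.mul (f j).continuous_of_finiteDimensional)) hx.1

end Chamber

section Coercivity

variable {ι E : Type*} [NormedAddCommGroup E] [NormedSpace ℝ E]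

/-- `f0` grows at least linearly at infinity on the set `C`. -/
def IsCoerciveOn (f0 : E →ₗ[ℝ] ℝ) (C : Set E) : Prop :=
  ∃ m K : ℝ, 0 < K ∧ ∀ x ∈ C, ‖x‖ + 1 ≤ K * (f0 x - m)

variable {f : ι → E →ᵃ[ℝ] ℝ} {f0 : E →ₗ[ℝ] ℝ} {x₀ z : E}

theorem nonneg_of_bddBelow_chamber (hx₀ : ∀ j, f j x₀ ≠ 0) (hb : BddBelow (f0 '' chamber f x₀))
    (hz : ∀ j, 0 ≤ f j x₀ * (f j).linear z) : 0 ≤ f0 z := by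
  obtain ⟨m, hm⟩ := hb
  by_contra! hneg
  obtain ⟨t, ht, hlt⟩ : ∃ t : ℝ, 0 ≤ t ∧ f0 x₀ + t * f0 z < m := by
    refine ⟨max 0 ((m - 1 - f0 x₀) / f0 z), le_max_left _ _, ?_⟩
    have := mul_le_mul_of_nonpos_right (le_max_right 0 ((m - 1 - f0 x₀) / f0 z)) hneg.le
    rw [div_mul_cancel₀ _ hneg.ne] at this
    linarith
  have hmem : x₀ ∈ chamber f x₀ := fun j => mul_self_pos.2 (hx₀ j)
  have := hm (mem_image_of_mem f0 (add_smul_mem_chamber hmem hz ht))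
  rw [map_add, map_smul, smul_eq_mul] at this
  linarith

-- If `f0 z = 0`, then `z` can be perturbed, within the recession cone, along a line on which `f0`
-- is not constant, which makes `f0` negative.
theorem pos_of_bddBelow_chamber [Finite ι] (hx₀ : ∀ j, f j x₀ ≠ 0)
    (hb : BddBelow (f0 '' chamber f x₀))
    (hw : ∃ w, f0 w ≠ 0 ∧ ∀ j, (f j).linear z = 0 → (f j).linear w = 0)
    (hz : ∀ j, 0 ≤ f j x₀ * (f j).linear z) : 0 < f0 z := by
  obtain ⟨w, hw0, hw⟩ := hw
  refine lt_of_le_of_ne (nonneg_of_bddBelow_chamber hx₀ hb hz) fun h0 => ?_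
  have hnear : ∀ᶠ t : ℝ in nhds 0, ∀ j, 0 ≤ f j x₀ * (f j).linear (z - (t * f0 w) • w) := by
    refine eventually_all.2 fun j => ?_
    simp only [map_sub, map_smul, smul_eq_mul]
    by_cases hj : (f j).linear z = 0
    · simp [hj, hw j hj]
    · have hpos : 0 < f j x₀ * ((f j).linear z - 0 * f0 w * (f j).linear w) := by
        simpa using lt_of_le_of_ne (hz j) (mul_ne_zero (hx₀ j) hj).symm
      have hcont : Continuous fun t : ℝ =>
          f j x₀ * ((f j).linear z - t * f0 w * (f j).linear w) := by fun_prop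
      exact (hcont.continuousAt.eventually (lt_mem_nhds hpos)).mono fun t ht => ht.le
  obtain ⟨t, ht, htpos⟩ :=
    ((hnear.filter_mono nhdsWithin_le_nhds).and (self_mem_nhdsWithin (s := Ioi (0 : ℝ)))).exists
  have := nonneg_of_bddBelow_chamber hx₀ hb ht
  rw [map_sub, map_smul, ← h0, smul_eq_mul] at this
  nlinarith [mul_self_pos.2 hw0, mul_pos (mem_Ioi.1 htpos) (mul_self_pos.2 hw0)]

theorem exists_transverse_of_generic {k : ℕ} [Fintype ι]
    (hf : ∀ S : Finset ι, S.card = k → ∃! x, ∀ j ∈ S, f j x = 0)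
    (hf0 : ∀ U : Finset ι, U.card = k - 1 →
      ∃ x y, (∀ j ∈ U, f j x = 0) ∧ (∀ j ∈ U, f j y = 0) ∧ f0 x ≠ f0 y)
    (hk : k ≤ Fintype.card ι) (hz : z ≠ 0) :
    ∃ w, f0 w ≠ 0 ∧ ∀ j, (f j).linear z = 0 → (f j).linear w = 0 := by
  set V : Finset ι := Finset.univ.filter fun j => (f j).linear z = 0 with hV
  have hVk : V.card ≤ k - 1 := by
    by_contra! hlt
    obtain ⟨S, hSV, hS⟩ := Finset.exists_subset_card_eq (show k ≤ V.card by omega)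
    exact hz (eq_zero_of_existsUnique (hf S hS) fun j hj => (Finset.mem_filter.1 (hSV hj)).2)
  obtain ⟨U, hVU, -, hU⟩ := Finset.exists_subsuperset_card_eq (Finset.subset_univ V) hVk
    (by rw [Finset.card_univ]; omega)
  obtain ⟨w, hw0, hw⟩ := exists_direction (hf0 U hU)
  exact ⟨w, hw0 ▸ one_ne_zero, fun j hj => hw j (hVU (by simp [hV, hj]))⟩

theorem isCoerciveOn_chamber [Finite ι] [FiniteDimensional ℝ E]
    (hx₀ : ∀ j, f j x₀ ≠ 0) (hb : BddBelow (f0 '' chamber f x₀))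
    (htrans : ∀ z ≠ 0, ∃ w, f0 w ≠ 0 ∧ ∀ j, (f j).linear z = 0 → (f j).linear w = 0) :
    IsCoerciveOn f0 (chamber f x₀) := by
  obtain ⟨m, hm⟩ := id hb
  by_contra hcoercive
  simp only [IsCoerciveOn, not_exists, not_and, not_forall, not_le] at hcoercive
  choose x hxmem hx using fun n : ℕ => hcoercive (m - 1) (n + 1) (by positivity)
  have hm' (n : ℕ) : m ≤ f0 (x n) := hm (mem_image_of_mem f0 (hxmem n))
  have hnorm : Tendsto (fun n => ‖x n‖) atTop atTop :=
    tendsto_atTop_mono (fun n => by nlinarith [hx n, hm' n]) tendsto_natCast_atTop_atTop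
  obtain ⟨u, hu, φ, hφ, hlim⟩ := exists_unit_tendsto_inv_norm_mul hnorm
  have hrec (j : ι) : 0 ≤ f j x₀ * (f j).linear u :=
    ge_of_tendsto' ((hlim (f j)).const_mul (f j x₀)) fun n => by
      rw [mul_left_comm]
      exact mul_nonneg (by positivity) (hxmem (φ n) j).le
  have hu0 : u ≠ 0 := norm_ne_zero_iff.1 (hu ▸ one_ne_zero)
  refine (pos_of_bddBelow_chamber hx₀ hb (htrans u hu0) hrec).not_ge ?_
  have hf0 : Tendsto (fun n => ‖x (φ n)‖⁻¹ * (f0 (x (φ n)) - (m - 1))) atTop (nhds (f0 u)) := by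
    simpa using hlim (f0.toAffineMap - AffineMap.const ℝ E (m - 1))
  have hzero : Tendsto (fun n => (1 + ‖x (φ n)‖⁻¹) * ((φ n : ℝ) + 1)⁻¹) atTop (nhds 0) := by
    have hinv := (hnorm.comp hφ.tendsto_atTop).inv_tendsto_atTop.const_add 1
    have hinv' := tendsto_one_div_add_atTop_nhds_zero_nat (𝕜 := ℝ) |>.comp hφ.tendsto_atTop
    simpa using hinv.mul hinv'
  have hpos : ∀ᶠ n in atTop, 0 < ‖x (φ n)‖ :=
    (hnorm.comp hφ.tendsto_atTop).eventually_gt_atTop 0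
  refine le_of_tendsto_of_tendsto hf0 hzero (hpos.mono fun n hn => ?_)
  have := (hx (φ n)).le
  calc ‖x (φ n)‖⁻¹ * (f0 (x (φ n)) - (m - 1))
      ≤ ‖x (φ n)‖⁻¹ * ((‖x (φ n)‖ + 1) / (φ n + 1)) := by
        gcongr
        rwa [le_div_iff₀' (by positivity)]
    _ = (1 + ‖x (φ n)‖⁻¹) * ((φ n : ℝ) + 1)⁻¹ := by field_simp

end Coercivity

section Integrability

open Asymptotics

theorem integrable_abs_rpow_mul_exp_neg_mul_abs {a δ : ℝ} (ha : -1 < a) (hδ : 0 < δ) :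
    Integrable fun y : ℝ => |y| ^ a * Real.exp (-(δ * |y|)) := by
  have hIoi : IntegrableOn (fun y : ℝ => |y| ^ a * Real.exp (-(δ * |y|))) (Ioi 0) := by
    refine (integrableOn_rpow_mul_exp_neg_mul_rpow ha one_pos hδ).congr_fun (fun y hy => ?_)
      measurableSet_Ioi
    simp only [Real.rpow_one, abs_of_pos (mem_Ioi.1 hy), neg_mul]
  have hIio : IntegrableOn (fun y : ℝ => |y| ^ a * Real.exp (-(δ * |y|))) (Iio 0) := by
    simpa using hIoi.comp_neg
  rw [← integrableOn_univ, ← Iic_union_Ioi (a := (0 : ℝ))]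
  exact ((integrableOn_Iic_iff_integrableOn_Iio).2 hIio).union hIoi

variable {ι E : Type*} [NormedAddCommGroup E]

/-- The function `h` grows more slowly than every exponential of the norm. -/
def IsSubexponential (h : E → ℝ) : Prop :=
  ∀ δ > 0, h =O[⊤] fun x => Real.exp (δ * ‖x‖)

theorem IsSubexponential.mul {h₁ h₂ : E → ℝ} (hh₁ : IsSubexponential h₁)
    (hh₂ : IsSubexponential h₂) : IsSubexponential fun x => h₁ x * h₂ x := fun δ hδ => by
  refine ((hh₁ (δ / 2) (half_pos hδ)).mul (hh₂ (δ / 2) (half_pos hδ))).congr_right fun x => ?_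
  rw [← Real.exp_add, ← add_mul, add_halves]

theorem isSubexponential_one : IsSubexponential fun _ : E => (1 : ℝ) := fun δ hδ =>
  isBigO_top.2 ⟨1, fun x => by
    rw [one_mul, norm_one, Real.norm_of_nonneg (Real.exp_pos _).le]
    exact Real.one_le_exp (by positivity)⟩

theorem isSubexponential_finsetProd {s : Finset ι} {h : ι → E → ℝ}
    (hh : ∀ j ∈ s, IsSubexponential (h j)) : IsSubexponential fun x => ∏ j ∈ s, h j x := by
  rw [← Finset.prod_fn]
  exact Finset.prod_induction h IsSubexponential (fun _ _ => IsSubexponential.mul)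
    isSubexponential_one hh

variable [NormedSpace ℝ E]

theorem isSubexponential_abs_rpow [FiniteDimensional ℝ E] (g : E →ᵃ[ℝ] ℝ) {a : ℝ} (ha : 0 ≤ a) :
    IsSubexponential fun x => |g x| ^ a := fun δ hδ => by
  obtain ⟨K, hK, hg⟩ := exists_abs_le_mul_norm_add_one g
  have ht : 0 < δ / K := div_pos hδ hK
  refine isBigO_top.2 ⟨(a / |δ / K|) ^ a * Real.exp δ, fun x => ?_⟩
  rw [Real.norm_of_nonneg (by positivity), Real.norm_of_nonneg (Real.exp_pos _).le, mul_assoc,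
    ← Real.exp_add]
  refine (ProbabilityTheory.rpow_abs_le_mul_exp_abs (g x) ha ht.ne').trans ?_
  gcongr
  calc |δ / K| * |g x| ≤ δ / K * (K * (‖x‖ + 1)) := by
        rw [abs_of_pos ht]
        gcongr
        exact hg x
    _ = δ + δ * ‖x‖ := by field_simp; ring

theorem isSubexponential_affineForm [FiniteDimensional ℝ E] (g : E →ᵃ[ℝ] ℝ) :
    IsSubexponential g := fun δ hδ =>
  .of_abs_left <| by simpa using isSubexponential_abs_rpow g zero_le_one δ hδ

theorem IsCoerciveOn.exists_exp_mul_isBigO {f0 : E →ₗ[ℝ] ℝ} {C : Set E} (hC : IsCoerciveOn f0 C)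
    {h : E → ℝ} (hh : IsSubexponential h) {ε : ℝ} (hε : 0 < ε) :
    ∃ c > 0, (fun x => Real.exp (-(ε * f0 x)) * h x) =O[𝓟 C] fun x => Real.exp (-(c * ‖x‖)) := by
  obtain ⟨m, K, hK, hle⟩ := hC
  set c := ε / K / 2 with hc
  have hc0 : 0 < c := by positivity
  have hexp : (fun x => Real.exp (-(ε * f0 x))) =O[𝓟 C] fun x => Real.exp (-(2 * c * ‖x‖)) := by
    refine isBigO_principal.2 ⟨Real.exp (-(ε * m)), fun x hx => ?_⟩
    rw [Real.norm_of_nonneg (Real.exp_pos _).le, Real.norm_of_nonneg (Real.exp_pos _).le,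
      ← Real.exp_add, Real.exp_le_exp]
    have : ε / K * (‖x‖ + 1) ≤ ε / K * (K * (f0 x - m)) := by gcongr; exact hle x hx
    have h2 : ε / K * (K * (f0 x - m)) = ε * (f0 x - m) := by field_simp
    have h3 : 2 * c * ‖x‖ = ε / K * ‖x‖ := by rw [hc]; ring
    nlinarith [div_pos hε hK]
  refine ⟨c, hc0, (hexp.mul ((hh c hc0).mono le_top)).congr_right fun x => ?_⟩
  rw [← Real.exp_add]
  congr 1
  ring

/-- The hyperplanes indexed by `S`, as many as the dimension, have linearly independent equations:
the forms `f j` with `j ∈ S` are affine coordinates on `E`. -/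
def IsCoordinateSystem (f : ι → E →ᵃ[ℝ] ℝ) (S : Finset ι) : Prop :=
  S.card = Module.finrank ℝ E ∧ ∀ z, (∀ j ∈ S, (f j).linear z = 0) → z = 0

variable [FiniteDimensional ℝ E]

theorem exists_exp_neg_mul_norm_isBigO_prod (f : ι → E →ᵃ[ℝ] ℝ) (S : Finset ι) {c : ℝ}
    (hc : 0 < c) : ∃ η > 0,
      (fun x => Real.exp (-(c * ‖x‖))) =O[⊤] fun x => ∏ j ∈ S, Real.exp (-(η * |f j x|)) := by
  choose K hK hle using fun j => exists_abs_le_mul_norm_add_one (f j)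
  set M := 1 + ∑ j ∈ S, K j
  have hsum : 0 ≤ ∑ j ∈ S, K j := Finset.sum_nonneg fun j _ => (hK j).le
  have hM0 : 0 < M := by positivity
  refine ⟨c / M, by positivity, isBigO_top.2 ⟨Real.exp c, fun x => ?_⟩⟩
  rw [← Real.exp_sum, Real.norm_of_nonneg (Real.exp_pos _).le,
    Real.norm_of_nonneg (Real.exp_pos _).le, ← Real.exp_add, Real.exp_le_exp,
    Finset.sum_neg_distrib, ← Finset.mul_sum]
  have : c / M * ∑ j ∈ S, |f j x| ≤ c * (‖x‖ + 1) :=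
    calc c / M * ∑ j ∈ S, |f j x| ≤ c / M * ∑ j ∈ S, K j * (‖x‖ + 1) := by
          gcongr with j
          exact hle j x
      _ ≤ c / M * (M * (‖x‖ + 1)) := by
          rw [← Finset.sum_mul]
          gcongr
          linarith
      _ = c * (‖x‖ + 1) := by field_simp
  linarith

variable [MeasurableSpace E] [BorelSpace E] (μ : Measure E) [μ.IsAddHaarMeasure]

theorem integrable_prod_comp_affineForm {f : ι → E →ᵃ[ℝ] ℝ} {S : Finset ι}
    (hS : IsCoordinateSystem f S) {φ : ι → ℝ → ℝ}
    (hφ : ∀ j, Integrable (φ j)) : Integrable (fun x => ∏ j ∈ S, φ j (f j x)) μ := by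
  let L : E →ₗ[ℝ] (S → ℝ) := LinearMap.pi fun j => (f j).linear
  have hinj : Function.Injective L := (injective_iff_map_eq_zero L).2 fun z hz =>
    hS.2 z fun j hj => congrFun hz ⟨j, hj⟩
  let e := (L.linearEquivOfInjective hinj (by simp [hS.1])).toContinuousLinearEquiv
  have hprod : Integrable fun y : S → ℝ => ∏ j : S, φ j (y j + f j 0) :=
    .fintype_prod fun j : S => (hφ j).comp_add_right (f j 0)
  have : (μ.map e).IsAddHaarMeasure := e.isAddHaarMeasure_map μ
  have hmap : Integrable (fun y : S → ℝ => ∏ j : S, φ j (y j + f j 0)) (μ.map e) := by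
    rw [(μ.map e).isAddLeftInvariant_eq_smul volume]
    exact hprod.smul_measure_nnreal
  refine (hmap.comp_measurable e.continuous.measurable).congr (.of_forall fun x => ?_)
  exact (Finset.prod_congr rfl fun (j : S) _ => congrArg (φ j) (congrFun (f j).decomp x).symm).trans
    (Finset.prod_coe_sort S fun j => φ j (f j x))

end Integrability

section MasterFunction

open Asymptotics

variable {ι E : Type*} [Fintype ι] [NormedAddCommGroup E] [NormedSpace ℝ E]

/-- The master function `∏ j, |f j| ^ α j` times the density `(∏ j ∈ S, f j)⁻¹`, that is the form
`ω_S` without its determinant. -/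
def masterWeight (f : ι → E →ᵃ[ℝ] ℝ) (α : ι → ℝ) (S : Finset ι) (x : E) : ℝ :=
  (∏ j, |f j x| ^ α j) * (∏ j ∈ S, f j x)⁻¹

/-- The integrand `e^{-λ f0} (∏ j, |f j| ^ α j) (∏ j ∈ S, f j)⁻¹` of the Laplace integrals. -/
def laplaceIntegrand (f : ι → E →ᵃ[ℝ] ℝ) (f0 : E →ₗ[ℝ] ℝ) (α : ι → ℝ) (S : Finset ι) (lam : ℂ)
    (x : E) : ℂ :=
  Complex.exp (-(lam * f0 x)) * masterWeight f α S x

theorem norm_laplaceIntegrand (f : ι → E →ᵃ[ℝ] ℝ) (f0 : E →ₗ[ℝ] ℝ) (α : ι → ℝ) (S : Finset ι)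
    (lam : ℂ) (x : E) :
    ‖laplaceIntegrand f f0 α S lam x‖ = Real.exp (-(lam.re * f0 x)) * |masterWeight f α S x| := by
  simp [laplaceIntegrand, Complex.norm_exp]

variable {f : ι → E →ᵃ[ℝ] ℝ} {f0 : E →ₗ[ℝ] ℝ} {α : ι → ℝ} {S : Finset ι} {lam : ℂ}

theorem abs_masterWeight_le [DecidableEq ι] (f : ι → E →ᵃ[ℝ] ℝ) (α : ι → ℝ)
    (S : Finset ι) (x : E) :
    |masterWeight f α S x| ≤ (∏ j ∈ Sᶜ, |f j x| ^ α j) * ∏ j ∈ S, |f j x| ^ (α j - 1) := by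
  have hfactor (j : ι) : |f j x| ^ α j * |f j x|⁻¹ ≤ |f j x| ^ (α j - 1) := by
    rcases eq_or_ne (f j x) 0 with h | h
    · rw [h, abs_zero, inv_zero, mul_zero]
      positivity
    · rw [Real.rpow_sub_one (abs_ne_zero.2 h), div_eq_mul_inv]
  rw [masterWeight, abs_mul, abs_inv, Finset.abs_prod, Finset.abs_prod,
    ← Finset.prod_compl_mul_prod S, mul_assoc, ← Finset.prod_inv_distrib, ← Finset.prod_mul_distrib]
  simp only [abs_of_nonneg (Real.rpow_nonneg (abs_nonneg _) _)]
  gcongr with j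
  exact hfactor j

theorem masterWeight_erase [DecidableEq ι] {j : ι} {x : E} (hj : j ∈ S) (hx : f j x ≠ 0) :
    masterWeight f α (S.erase j) x = f j x * masterWeight f α S x := by
  rw [masterWeight, masterWeight, ← Finset.mul_prod_erase S _ hj, mul_inv]
  field_simp

theorem laplaceIntegrand_erase [DecidableEq ι] {j : ι} {x : E} (hj : j ∈ S) (hx : f j x ≠ 0) :
    laplaceIntegrand f f0 α (S.erase j) lam x = f j x * laplaceIntegrand f f0 α S lam x := by
  rw [laplaceIntegrand, laplaceIntegrand, masterWeight_erase hj hx, Complex.ofReal_mul,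
    mul_left_comm]

variable [FiniteDimensional ℝ E] [MeasurableSpace E] [BorelSpace E]

theorem measurable_laplaceIntegrand (f : ι → E →ᵃ[ℝ] ℝ) (f0 : E →ₗ[ℝ] ℝ) (α : ι → ℝ)
    (S : Finset ι) (lam : ℂ) : Measurable (laplaceIntegrand f f0 α S lam) := by
  have hf0 : Measurable f0 := f0.continuous_of_finiteDimensional.measurable
  have hf (j : ι) : Measurable (f j) := (f j).continuous_of_finiteDimensional.measurable
  unfold laplaceIntegrand masterWeight
  fun_prop

variable (μ : Measure E) [μ.IsAddHaarMeasure] {C : Set E}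

theorem integrableOn_mul_laplaceIntegrand (hC : MeasurableSet C) (hcoercive : IsCoerciveOn f0 C)
    (hα : ∀ j, 0 < α j) (hS : IsCoordinateSystem f S) {h : E → ℝ} (hh : Measurable h)
    (hsub : IsSubexponential h) (hlam : 0 < lam.re) :
    IntegrableOn (fun x => (h x : ℂ) * laplaceIntegrand f f0 α S lam x) C μ := by
  have hsub' : IsSubexponential fun x => h x * ∏ j ∈ Sᶜ, |f j x| ^ α j :=
    hsub.mul (isSubexponential_finsetProd fun j _ => isSubexponential_abs_rpow (f j) (hα j).le)
  obtain ⟨c, hc, hexp⟩ := hcoercive.exists_exp_mul_isBigO hsub' hlam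
  obtain ⟨η, hη, hprod⟩ := exists_exp_neg_mul_norm_isBigO_prod f S hc
  have hnorm (x : E) : ‖(h x : ℂ) * laplaceIntegrand f f0 α S lam x‖ ≤
      ‖Real.exp (-(lam.re * f0 x)) * (h x * ∏ j ∈ Sᶜ, |f j x| ^ α j) *
        ∏ j ∈ S, |f j x| ^ (α j - 1)‖ := by
    have hpos : 0 ≤ (∏ j ∈ Sᶜ, |f j x| ^ α j) * ∏ j ∈ S, |f j x| ^ (α j - 1) := by positivity
    rw [norm_mul, norm_laplaceIntegrand, Complex.norm_real, mul_assoc, mul_assoc, norm_mul,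
      norm_mul, Real.norm_of_nonneg (Real.exp_pos _).le, mul_left_comm, Real.norm_of_nonneg hpos]
    gcongr
    exact abs_masterWeight_le f α S x
  have hbig : (fun x => (h x : ℂ) * laplaceIntegrand f f0 α S lam x) =O[𝓟 C] fun x =>
      ∏ j ∈ S, |f j x| ^ (α j - 1) * Real.exp (-(η * |f j x|)) := by
    refine (isBigO_of_le _ hnorm).trans ?_
    refine ((hexp.trans (hprod.mono le_top)).mul (isBigO_refl (fun x =>
      ∏ j ∈ S, |f j x| ^ (α j - 1)) _)).congr_right fun x => ?_
    rw [Finset.prod_mul_distrib, mul_comm]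
  obtain ⟨M, hM⟩ := isBigO_principal.1 hbig
  have hint := integrable_prod_comp_affineForm μ hS fun j =>
    integrable_abs_rpow_mul_exp_neg_mul_abs (a := α j - 1) (by linarith [hα j]) hη
  refine (hint.norm.const_mul M).integrableOn.mono' ?_ ((ae_restrict_iff' hC).2 (.of_forall hM))
  exact ((Complex.measurable_ofReal.comp hh).mul
    (measurable_laplaceIntegrand f f0 α S lam)).aestronglyMeasurable

theorem integrableOn_laplaceIntegrand (hC : MeasurableSet C) (hcoercive : IsCoerciveOn f0 C)
    (hα : ∀ j, 0 < α j) (hS : IsCoordinateSystem f S) (hlam : 0 < lam.re) :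
    IntegrableOn (laplaceIntegrand f f0 α S lam) C μ := by
  simpa using integrableOn_mul_laplaceIntegrand μ hC hcoercive hα hS measurable_const
    isSubexponential_one hlam

theorem integrableOn_affineForm_mul_laplaceIntegrand (hC : MeasurableSet C)
    (hcoercive : IsCoerciveOn f0 C) (hα : ∀ j, 0 < α j) (hS : IsCoordinateSystem f S)
    (g : E →ᵃ[ℝ] ℝ) (hlam : 0 < lam.re) :
    IntegrableOn (fun x => (g x : ℂ) * laplaceIntegrand f f0 α S lam x) C μ :=
  integrableOn_mul_laplaceIntegrand μ hC hcoercive hα hS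
    g.continuous_of_finiteDimensional.measurable (isSubexponential_affineForm g) hlam

theorem integrableOn_laplaceIntegrand_erase [DecidableEq ι] (hC : MeasurableSet C)
    (hcoercive : IsCoerciveOn f0 C) (hα : ∀ j, 0 < α j) (hS : IsCoordinateSystem f S) {j : ι}
    (hj : j ∈ S) (hne : ∀ x ∈ C, f j x ≠ 0) (hlam : 0 < lam.re) :
    IntegrableOn (laplaceIntegrand f f0 α (S.erase j) lam) C μ := by
  refine (integrableOn_affineForm_mul_laplaceIntegrand μ hC hcoercive hα hS (f j) hlam).congr_fun
    (fun x hx => ?_) hC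
  rw [laplaceIntegrand_erase hj (hne x hx)]

end MasterFunction

section Differentiation

theorem hasDerivAt_integral_exp_neg_mul {Ω : Type*} [MeasurableSpace Ω] {ν : Measure Ω}
    {X : Ω → ℝ} {w : Ω → ℂ} {a : ℝ}
    (hint : ∀ l : ℂ, a < l.re → Integrable (fun x => Complex.exp (-(l * X x)) * w x) ν)
    (hint' : ∀ l : ℂ, a < l.re → Integrable (fun x => X x * (Complex.exp (-(l * X x)) * w x)) ν)
    {lam : ℂ} (hlam : a < lam.re) :
    HasDerivAt (fun l : ℂ => ∫ x, Complex.exp (-(l * X x)) * w x ∂ν)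
      (∫ x, -(X x * (Complex.exp (-(lam * X x)) * w x)) ∂ν) lam := by
  obtain ⟨b, hab, hb⟩ := exists_between hlam
  obtain ⟨c, hc⟩ := exists_gt lam.re
  have hnorm (x : Ω) (l : ℂ) : ‖(X x : ℂ) * (Complex.exp (-(l * X x)) * w x)‖ =
      Real.exp (-(l.re * X x)) * (|X x| * ‖w x‖) := by
    simp [Complex.norm_exp, mul_left_comm]
  -- on the strip `b < re l < c`, the integrand is dominated by its values at the two edges
  have hexp (t y : ℝ) (hbt : b ≤ t) (htc : t ≤ c) :
      Real.exp (-(t * y)) ≤ Real.exp (-(b * y)) + Real.exp (-(c * y)) := by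
    rcases le_total 0 y with hy | hy
    · refine le_add_of_le_of_nonneg (Real.exp_le_exp.2 ?_) (Real.exp_pos _).le
      exact neg_le_neg (mul_le_mul_of_nonneg_right hbt hy)
    · refine le_add_of_nonneg_of_le (Real.exp_pos _).le (Real.exp_le_exp.2 ?_)
      exact neg_le_neg (mul_le_mul_of_nonpos_right htc hy)
  have hstrip : Complex.re ⁻¹' Ioo b c ∈ nhds lam :=
    (isOpen_Ioo.preimage Complex.continuous_re).mem_nhds ⟨hb, hc⟩
  refine (hasDerivAt_integral_of_dominated_loc_of_deriv_le
    (F' := fun l x => -((X x : ℂ) * (Complex.exp (-(l * X x)) * w x)))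
    (bound := fun x => ‖(X x : ℂ) * (Complex.exp (-((b : ℂ) * X x)) * w x)‖ +
      ‖(X x : ℂ) * (Complex.exp (-((c : ℂ) * X x)) * w x)‖) hstrip ?_ (hint lam hlam)
    (hint' lam hlam).1.neg ?_ ?_ ?_).2
  · filter_upwards [hstrip] with l hl using (hint l (hab.trans hl.1)).1
  · refine .of_forall fun x l hl => ?_
    rw [norm_neg, hnorm, hnorm, hnorm, ← add_mul]
    gcongr
    exact hexp l.re (X x) hl.1.le hl.2.le
  · exact (hint' b hab).norm.add (hint' c (hlam.trans hc)).norm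
  · refine .of_forall fun x l _ => ?_
    have hlin : HasDerivAt (fun l : ℂ => -(l * X x)) (-(X x : ℂ)) l := by
      simpa using ((hasDerivAt_id l).mul_const (X x : ℂ)).fun_neg
    exact (hlin.cexp.mul_const (w x)).congr_deriv (by ring)

end Differentiation

section LineDerivative

variable {E F : Type*} [NormedAddCommGroup E] [NormedSpace ℝ E] [NormedAddCommGroup F]
  [NormedSpace ℝ F]

-- Average over `t ∈ [0, 1]` the integrals of `G' (x + t • v)`, which do not depend on `t`.
theorem integral_eq_zero_of_hasLineDerivAt [CompleteSpace F] [SecondCountableTopology E]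
    [MeasurableSpace E] [BorelSpace E] {μ : Measure E} [SFinite μ] [μ.IsAddRightInvariant]
    {G G' : E → F} {v : E}
    (hG : Integrable G μ) (hG' : Integrable G' μ) (hmeas : StronglyMeasurable G')
    (hcont : ∀ x, Continuous fun t : ℝ => G (x + t • v))
    (hderiv : ∀ᵐ x ∂μ, ∃ s : Set ℝ, s.Countable ∧
      ∀ t ∉ s, HasLineDerivAt ℝ G (G' (x + t • v)) (x + t • v) v) :
    ∫ x, G' x ∂μ = 0 := by
  have hprod : Integrable (Function.uncurry fun (x : E) (t : ℝ) => G' (x + t • v))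
      (μ.prod (volume.restrict (Ioc (0 : ℝ) 1))) := by
    have hcomp : StronglyMeasurable (Function.uncurry fun (x : E) (t : ℝ) => G' (x + t • v)) :=
      hmeas.comp_measurable (by fun_prop)
    refine (integrable_prod_iff' hcomp.aestronglyMeasurable).2
      ⟨.of_forall fun t => hG'.comp_add_right (t • v), ?_⟩
    simp only [Function.uncurry_apply_pair, integral_add_right_eq_self fun x => ‖G' x‖]
    exact integrable_const _
  have hline : ∀ᵐ x ∂μ, ∫ t in Ioc (0 : ℝ) 1, G' (x + t • v) = G (x + v) - G x := by
    filter_upwards [hderiv, hprod.prod_right_ae] with x ⟨s, hs, hderiv⟩ hint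
    have hderiv' (t : ℝ) (ht : t ∉ s) :
        HasDerivAt (fun t : ℝ => G (x + t • v)) (G' (x + t • v)) t := by
      have hshift : HasDerivAt (fun u : ℝ => G (x + t • v + u • v)) (G' (x + t • v)) (t - t) := by
        rw [sub_self]
        exact hderiv t ht
      simpa [add_assoc, ← add_smul] using hshift.comp_sub_const t t
    rw [← intervalIntegral.integral_of_le zero_le_one,
      integral_eq_of_hasDerivAt_off_countable_of_le _ _ zero_le_one hs (hcont x).continuousOn
        (fun t ht => hderiv' t ht.2) ((intervalIntegrable_iff_integrableOn_Ioc_of_le zero_le_one).2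
        hint), one_smul, zero_smul, add_zero]
  have hswap := integral_integral_swap hprod
  simp only [integral_add_right_eq_self G'] at hswap
  rw [integral_congr_ae hline, integral_sub (hG.comp_add_right v) hG,
    integral_add_right_eq_self G v, sub_self] at hswap
  simpa using hswap.symm

theorem hasLineDerivAt_indicator {C : Set E} {G G' : E → F} {x v : E} (hx : x ∉ frontier C)
    (h : x ∈ C → HasLineDerivAt ℝ G (G' x) x v) :
    HasLineDerivAt ℝ (C.indicator G) (C.indicator G' x) x v := by
  by_cases hxC : x ∈ C
  · rw [indicator_of_mem hxC]
    have : C ∈ nhds x := mem_interior_iff_mem_nhds.1 (self_sdiff_frontier C ▸ ⟨hxC, hx⟩)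
    exact (h hxC).congr_of_eventuallyEq (eventually_of_mem this fun y => (indicator_of_mem · G))
  · rw [indicator_of_notMem hxC]
    have : Cᶜ ∈ nhds x := mem_interior_iff_mem_nhds.1
      (self_sdiff_frontier Cᶜ ▸ ⟨hxC, frontier_compl C ▸ hx⟩)
    have hconst : HasLineDerivAt ℝ (fun _ => (0 : F)) 0 x v := hasDerivAt_const 0 0
    exact hconst.congr_of_eventuallyEq
      (eventually_of_mem this fun y => (indicator_of_notMem · G))

theorem hasDerivAt_abs_rpow_of_ne_zero {h : ℝ → ℝ} {h' t : ℝ} (a : ℝ) (hh : HasDerivAt h h' t)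
    (ht : h t ≠ 0) : HasDerivAt (fun s => |h s| ^ a) (|h t| ^ a * (a * h' * (h t)⁻¹)) t := by
  refine (((hasDerivAt_abs ht).comp t hh).rpow_const (Or.inl (abs_ne_zero.2 ht))).congr_deriv ?_
  rw [Function.comp_apply, Real.rpow_sub_one (abs_ne_zero.2 ht)]
  rcases lt_or_gt_of_ne ht with hneg | hpos
  · rw [abs_of_neg hneg, sign_neg hneg]
    field_simp
    simp
  · rw [abs_of_pos hpos, sign_pos hpos]
    field_simp
    simp

theorem hasLineDerivAt_affineForm (g : E →ᵃ[ℝ] ℝ) (x v : E) :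
    HasLineDerivAt ℝ g (g.linear v) x v := by
  simp only [HasLineDerivAt, apply_add_smul]
  simpa using ((hasDerivAt_id (0 : ℝ)).mul_const (g.linear v)).const_add (g x)

variable {ι : Type*} {f : ι → E →ᵃ[ℝ] ℝ} {f0 : E →ₗ[ℝ] ℝ} {α : ι → ℝ} {U : Finset ι} {lam : ℂ}
  {x v : E}

theorem prod_affineForm_add_smul (hv : ∀ j ∈ U, (f j).linear v = 0) (x : E) (t : ℝ) :
    ∏ j ∈ U, f j (x + t • v) = ∏ j ∈ U, f j x :=
  Finset.prod_congr rfl fun j hj => by rw [apply_add_smul, hv j hj, mul_zero, add_zero]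

variable [Fintype ι]

theorem hasLineDerivAt_prod_abs_rpow (α : ι → ℝ) (hx : ∀ j, f j x ≠ 0) (v : E) :
    HasLineDerivAt ℝ (fun x => ∏ j, |f j x| ^ α j)
      ((∏ j, |f j x| ^ α j) * ∑ j, α j * (f j).linear v * (f j x)⁻¹) x v := by
  have hfactor (j : ι) : HasLineDerivAt ℝ (fun x => |f j x| ^ α j)
      (|f j x| ^ α j * (α j * (f j).linear v * (f j x)⁻¹)) x v := by
    have hne : f j (x + (0 : ℝ) • v) ≠ 0 := by simpa using hx j
    simpa [HasLineDerivAt] using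
      hasDerivAt_abs_rpow_of_ne_zero (α j) (hasLineDerivAt_affineForm (f j) x v) hne
  refine (HasDerivAt.fun_finsetProd fun j _ => hfactor j).congr_deriv ?_
  rw [Finset.mul_sum]
  refine Finset.sum_congr rfl fun j hj => ?_
  rw [← Finset.mul_prod_erase _ _ hj, smul_eq_mul, zero_smul, add_zero]
  ring

variable [DecidableEq ι]

theorem hasLineDerivAt_masterWeight (hx : ∀ j, f j x ≠ 0) (hv : ∀ j ∈ U, (f j).linear v = 0) :
    HasLineDerivAt ℝ (masterWeight f α U)
      (∑ r ∈ Uᶜ, α r * (f r).linear v * masterWeight f α (insert r U) x) x v := by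
  have hderiv := (hasLineDerivAt_prod_abs_rpow α hx v).mul_const (∏ j ∈ U, f j x)⁻¹
  simp only [HasLineDerivAt, masterWeight, prod_affineForm_add_smul hv]
  refine hderiv.congr_deriv ?_
  rw [← Finset.sum_add_sum_compl U, Finset.sum_eq_zero fun j hj => by simp [hv j hj], zero_add,
    Finset.mul_sum, Finset.sum_mul]
  refine Finset.sum_congr rfl fun r hr => ?_
  rw [Finset.prod_insert (Finset.mem_compl.1 hr), mul_inv]
  ring

theorem hasLineDerivAt_laplaceIntegrand (hx : ∀ j, f j x ≠ 0)
    (hv : ∀ j ∈ U, (f j).linear v = 0) :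
    HasLineDerivAt ℝ (laplaceIntegrand f f0 α U lam)
      (-(lam * f0 v) * laplaceIntegrand f f0 α U lam x +
        ∑ r ∈ Uᶜ, ((α r * (f r).linear v : ℝ) : ℂ) * laplaceIntegrand f f0 α (insert r U) lam x)
      x v := by
  have hf0 := (hasLineDerivAt_affineForm f0.toAffineMap x v).ofReal_comp
  have hexp := (hf0.const_mul lam).fun_neg.cexp
  refine (hexp.fun_mul (hasLineDerivAt_masterWeight (α := α) hx hv).ofReal_comp).congr_deriv ?_
  simp only [laplaceIntegrand, zero_smul, add_zero, LinearMap.coe_toAffineMap,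
    LinearMap.toAffineMap_linear, Complex.ofReal_sum, Complex.ofReal_mul, Finset.mul_sum]
  congr 1
  · ring
  · exact Finset.sum_congr rfl fun r _ => by ring

end LineDerivative

section IntegrationByParts

variable {ι E : Type*} [NormedAddCommGroup E] [NormedSpace ℝ E]
  {f : ι → E →ᵃ[ℝ] ℝ} {α : ι → ℝ} {U : Finset ι} {x₀ x v : E}

theorem countable_setOf_exists_affineForm_eq_zero [Countable ι] (hx : ∀ j, f j x ≠ 0) (v : E) :
    {t : ℝ | ∃ j, f j (x + t • v) = 0}.Countable := by
  rw [ofPred_exists]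
  refine countable_iUnion fun j => Set.Subsingleton.countable fun s hs t ht => ?_
  simp only [mem_ofPred_eq, apply_add_smul] at hs ht
  have hslope : (f j).linear v ≠ 0 := fun h => hx j (by simpa [h] using hs)
  exact mul_right_cancel₀ hslope (by linarith)

variable [Fintype ι]

theorem masterWeight_eq_zero {j : ι} (hα : α j ≠ 0) (hx : f j x = 0) :
    masterWeight f α U x = 0 := by
  rw [masterWeight, Finset.prod_eq_zero (Finset.mem_univ j) (by simp [hx, hα]), zero_mul]

variable [FiniteDimensional ℝ E]

theorem continuous_laplaceIntegrand_add_smul (f0 : E →ₗ[ℝ] ℝ) (hα : ∀ j, 0 ≤ α j) (lam : ℂ)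
    (hv : ∀ j ∈ U, (f j).linear v = 0) (x : E) :
    Continuous fun t : ℝ => laplaceIntegrand f f0 α U lam (x + t • v) := by
  have hf0 : Continuous f0 := f0.continuous_of_finiteDimensional
  have hf (j : ι) : Continuous (f j) := (f j).continuous_of_finiteDimensional
  simp only [laplaceIntegrand, masterWeight, prod_affineForm_add_smul hv]
  fun_prop (disch := exact hα _)

theorem continuous_indicator_chamber_laplaceIntegrand_add_smul (f0 : E →ₗ[ℝ] ℝ)
    (hα : ∀ j, 0 < α j) (lam : ℂ) (hx₀ : ∀ j, f j x₀ ≠ 0) (hv : ∀ j ∈ U, (f j).linear v = 0)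
    (x : E) :
    Continuous fun t : ℝ =>
      (chamber f x₀).indicator (laplaceIntegrand f f0 α U lam) (x + t • v) := by
  have hline : Continuous fun t : ℝ => x + t • v := by fun_prop
  refine continuous_indicator (s := (fun t : ℝ => x + t • v) ⁻¹' chamber f x₀) (fun t ht => ?_)
    (continuous_laplaceIntegrand_add_smul f0 (fun j => (hα j).le) lam hv x).continuousOn
  obtain ⟨j, hj⟩ :=
    exists_eq_zero_of_mem_frontier_chamber hx₀ (hline.frontier_preimage_subset _ ht)
  rw [laplaceIntegrand, masterWeight_eq_zero (hα j).ne' hj, Complex.ofReal_zero, mul_zero]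

theorem integral_chamber_laplaceIntegrand_by_parts [DecidableEq ι] [MeasurableSpace E]
    [BorelSpace E] (μ : Measure E) [μ.IsAddHaarMeasure] {f0 : E →ₗ[ℝ] ℝ} {lam : ℂ}
    (hα : ∀ j, 0 < α j) (hx₀ : ∀ j, f j x₀ ≠ 0)
    (hv : ∀ j ∈ U, (f j).linear v = 0)
    (hint : IntegrableOn (laplaceIntegrand f f0 α U lam) (chamber f x₀) μ)
    (hint' : ∀ r ∉ U, IntegrableOn (laplaceIntegrand f f0 α (insert r U) lam) (chamber f x₀) μ) :
    lam * f0 v * ∫ x in chamber f x₀, laplaceIntegrand f f0 α U lam x ∂μ =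
      ∑ r ∈ Uᶜ, ((α r * (f r).linear v : ℝ) : ℂ) *
        ∫ x in chamber f x₀, laplaceIntegrand f f0 α (insert r U) lam x ∂μ := by
  have hC := (isOpen_chamber f x₀).measurableSet
  set G' : E → ℂ := fun x => -(lam * f0 v) * laplaceIntegrand f f0 α U lam x +
    ∑ r ∈ Uᶜ, ((α r * (f r).linear v : ℝ) : ℂ) * laplaceIntegrand f f0 α (insert r U) lam x with hG'
  have hterm (r : ι) (hr : r ∈ Uᶜ) := (hint' r (Finset.mem_compl.1 hr)).const_mul
    ((α r * (f r).linear v : ℝ) : ℂ)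
  have hG'int : IntegrableOn G' (chamber f x₀) μ :=
    Integrable.add (hint.const_mul _) (integrable_finsetSum _ hterm)
  have hmeas : Measurable G' := by
    have := measurable_laplaceIntegrand f f0 α (lam := lam)
    fun_prop
  have hzero : ∫ x, (chamber f x₀).indicator G' x ∂μ = 0 := by
    refine integral_eq_zero_of_hasLineDerivAt (v := v) (hint.integrable_indicator hC)
      (hG'int.integrable_indicator hC) (hmeas.indicator hC).stronglyMeasurable
      (continuous_indicator_chamber_laplaceIntegrand_add_smul f0 hα lam hx₀ hv) ?_
    filter_upwards [ae_all_iff.2 fun j => ae_ne_zero μ (f j) (hx₀ j)] with x hx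
    refine ⟨_, countable_setOf_exists_affineForm_eq_zero hx v, fun t ht => ?_⟩
    refine hasLineDerivAt_indicator
      (fun hfrontier => ht (exists_eq_zero_of_mem_frontier_chamber hx₀ hfrontier)) fun _ => ?_
    exact hasLineDerivAt_laplaceIntegrand (fun j hj => ht ⟨j, hj⟩) hv
  rw [integral_indicator hC, hG', integral_add (hint.const_mul _) (integrable_finsetSum _ hterm),
    integral_const_mul, integral_finsetSum _ hterm] at hzero
  simp only [integral_const_mul] at hzero
  linear_combination -hzero

end IntegrationByParts

section EdgeVectors

variable {ι E : Type*} [DecidableEq ι] [NormedAddCommGroup E] [NormedSpace ℝ E]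

/-- For each `j ∈ S`, the vector `v j` directs the line on which the forms of `S.erase j` vanish and
is normalized by `f0`: it is the vector `e_U` for `U = S.erase j`. -/
def IsEdgeSystem (f : ι → E →ᵃ[ℝ] ℝ) (f0 : E →ₗ[ℝ] ℝ) (S : Finset ι) (v : ι → E) : Prop :=
  ∀ j ∈ S, f0 (v j) = 1 ∧ ∀ i ∈ S.erase j, (f i).linear (v j) = 0

variable {f : ι → E →ᵃ[ℝ] ℝ} {f0 : E →ₗ[ℝ] ℝ} {S : Finset ι} {v : ι → E} {j : ι}

theorem exists_isEdgeSystem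
    (hf0 : ∀ U : Finset ι, U.card = S.card - 1 →
      ∃ x y, (∀ j ∈ U, f j x = 0) ∧ (∀ j ∈ U, f j y = 0) ∧ f0 x ≠ f0 y) :
    ∃ v, IsEdgeSystem f f0 S v := by
  choose! v hv using fun j (hj : j ∈ S) => exists_direction (hf0 _ (Finset.card_erase_of_mem hj))
  exact ⟨v, hv⟩

theorem IsEdgeSystem.linear_ne_zero (hv : IsEdgeSystem f f0 S v) (hS : IsCoordinateSystem f S)
    (hj : j ∈ S) : (f j).linear (v j) ≠ 0 := fun h => by
  obtain ⟨hf0, herase⟩ := hv j hj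
  have : v j = 0 := hS.2 _ fun i hi => by
    rcases eq_or_ne i j with rfl | hij
    · exact h
    · exact herase i (Finset.mem_erase.2 ⟨hij, hi⟩)
  exact zero_ne_one (by rwa [this, map_zero] at hf0)

theorem IsEdgeSystem.eq_add_sum (hv : IsEdgeSystem f f0 S v) (hS : IsCoordinateSystem f S) {X : E}
    (hX : ∀ j ∈ S, f j X = 0) (x : E) :
    f0 x = f0 X + ∑ j ∈ S, ((f j).linear (v j))⁻¹ * f j x := by
  have hsub (i : ι) (hi : i ∈ S) : (f i).linear (x - X) = f i x := by
    rw [← vsub_eq_sub, AffineMap.linearMap_vsub, hX i hi, vsub_eq_sub, sub_zero]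
  have hexpand : x - X - ∑ j ∈ S, (((f j).linear (v j))⁻¹ * f j x) • v j = 0 :=
    hS.2 _ fun i hi => by
      rw [map_sub, hsub i hi, map_sum, Finset.sum_eq_single_of_mem i hi fun j hj hji => ?_]
      · rw [map_smul, smul_eq_mul, mul_right_comm, inv_mul_cancel₀ (hv.linear_ne_zero hS hi),
          one_mul, sub_self]
      · rw [map_smul, (hv j hj).2 i (Finset.mem_erase.2 ⟨hji.symm, hi⟩), smul_zero]
  rw [← sub_eq_iff_eq_add', ← map_sub, sub_eq_zero.1 hexpand, map_sum]
  exact Finset.sum_congr rfl fun j hj => by rw [map_smul, (hv j hj).1, smul_eq_mul, mul_one]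

theorem linear_dotProduct_equivFun {n : Type*} [Fintype n] (b : Module.Basis n ℝ E)
    (l : E →ₗ[ℝ] ℝ) (e : E) : (fun c => l (b c)) ⬝ᵥ b.equivFun e = l e := by
  conv_rhs => rw [← b.sum_equivFun e, map_sum]
  exact Finset.sum_congr rfl fun c _ => by rw [map_smul, smul_eq_mul, mul_comm]

theorem sign_mul_abs_det_linear {n : Type*} [Fintype n] [DecidableEq n] (b : Module.Basis n ℝ E)
    {T : Finset ι} {r : ι} (hj : j ∈ S) (hT : T = insert r (S.erase j)) (σ : n ≃ S) (τ : n ≃ T)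
    {e : E} (he : ∀ i ∈ S.erase j, (f i).linear e = 0) (hne : (f j).linear e ≠ 0) :
    Real.sign ((f j).linear e * (f r).linear e) *
        |(Matrix.of fun i c => (f (τ i)).linear (b c)).det| =
      |(Matrix.of fun i c => (f (σ i)).linear (b c)).det| *
        (((f j).linear e)⁻¹ * (f r).linear e) := by
  subst hT
  refine sign_mul_mul_eq_of_mul_abs_eq hne ?_
  have hdot (i : ι) := linear_dotProduct_equivFun b (f i).linear e
  have := abs_det_insert_erase_mul (fun i c => (f i).linear (b c)) hj σ τ (v := b.equivFun e)
    fun i hi => (hdot i).trans (he i hi)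
  rwa [hdot, hdot] at this

end EdgeVectors

section LaplaceIntegral

variable {ι E : Type*} [Fintype ι] [DecidableEq ι] [NormedAddCommGroup E] [NormedSpace ℝ E]
  [FiniteDimensional ℝ E] [MeasurableSpace E] [BorelSpace E] (μ : Measure E) [μ.IsAddHaarMeasure]
  {f : ι → E →ᵃ[ℝ] ℝ} {f0 : E →ₗ[ℝ] ℝ} {α : ι → ℝ} {S : Finset ι} {v : ι → E} {X : E} {lam : ℂ}

theorem hasDerivAt_setIntegral_laplaceIntegrand {C : Set E} (hC : MeasurableSet C)
    (hcoercive : IsCoerciveOn f0 C) (hne : ∀ x ∈ C, ∀ j ∈ S, f j x ≠ 0) (hα : ∀ j, 0 < α j)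
    (hS : IsCoordinateSystem f S) (hv : IsEdgeSystem f f0 S v) (hX : ∀ j ∈ S, f j X = 0)
    (hlam : 0 < lam.re) :
    HasDerivAt (fun l => ∫ x in C, laplaceIntegrand f f0 α S l x ∂μ)
      (-(f0 X * ∫ x in C, laplaceIntegrand f f0 α S lam x ∂μ +
        ∑ j ∈ S, (((f j).linear (v j))⁻¹ : ℝ) *
          ∫ x in C, laplaceIntegrand f f0 α (S.erase j) lam x ∂μ)) lam := by
  have hderiv := hasDerivAt_integral_exp_neg_mul (ν := μ.restrict C) (X := f0)
    (w := fun x => masterWeight f α S x)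
    (fun l hl => integrableOn_laplaceIntegrand μ hC hcoercive hα hS hl)
    (fun l hl => integrableOn_affineForm_mul_laplaceIntegrand μ hC hcoercive hα hS
      f0.toAffineMap hl) hlam
  refine hderiv.congr_deriv ?_
  have hsplit : ∀ x ∈ C, (f0 x : ℂ) * laplaceIntegrand f f0 α S lam x =
      f0 X * laplaceIntegrand f f0 α S lam x +
        ∑ j ∈ S, (((f j).linear (v j))⁻¹ : ℝ) * laplaceIntegrand f f0 α (S.erase j) lam x := by
    intro x hx
    rw [Finset.sum_congr rfl fun j hj => by rw [laplaceIntegrand_erase hj (hne x hx j hj),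
      ← mul_assoc, ← Complex.ofReal_mul], ← Finset.sum_mul, ← add_mul, ← Complex.ofReal_sum,
      ← Complex.ofReal_add, ← hv.eq_add_sum hS hX]
  have hint := (integrableOn_laplaceIntegrand μ hC hcoercive hα hS hlam).const_mul (f0 X : ℂ)
  have hint' (j : ι) (hj : j ∈ S) := (integrableOn_laplaceIntegrand_erase μ hC hcoercive hα hS hj
    (fun x hx => hne x hx j hj) hlam).const_mul (((f j).linear (v j))⁻¹ : ℝ)
  rw [integral_neg]
  congr 1
  simp only [← integral_const_mul]
  rw [← integral_finsetSum _ hint', ← integral_add hint (integrable_finsetSum _ hint')]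
  exact setIntegral_congr_fun hC hsplit

theorem sum_inv_linear_mul_integral_erase {x₀ : E} (hx₀ : ∀ j, f j x₀ ≠ 0)
    (hcoercive : IsCoerciveOn f0 (chamber f x₀)) (hα : ∀ j, 0 < α j)
    (hcoord : ∀ T : Finset ι, T.card = S.card → IsCoordinateSystem f T)
    (hv : IsEdgeSystem f f0 S v) (hlam : 0 < lam.re) :
    ∑ j ∈ S, (((f j).linear (v j))⁻¹ : ℝ) *
        ∫ x in chamber f x₀, laplaceIntegrand f f0 α (S.erase j) lam x ∂μ =
      lam⁻¹ * ((∑ j ∈ S, α j : ℝ) * ∫ x in chamber f x₀, laplaceIntegrand f f0 α S lam x ∂μ +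
        ∑ j ∈ S, ∑ r ∈ Sᶜ, (((f j).linear (v j))⁻¹ * (f r).linear (v j) * α r : ℝ) *
          ∫ x in chamber f x₀, laplaceIntegrand f f0 α (insert r (S.erase j)) lam x ∂μ) := by
  have hC := (isOpen_chamber f x₀).measurableSet
  have hlam0 : lam ≠ 0 := by
    rintro rfl
    exact lt_irrefl _ hlam
  rw [Complex.ofReal_sum, Finset.sum_mul, ← Finset.sum_add_distrib, Finset.mul_sum]
  refine Finset.sum_congr rfl fun j hj => ?_
  have hcard (r : ι) (hr : r ∉ S.erase j) : (insert r (S.erase j)).card = S.card :=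
    card_insert_erase hj hr
  have hparts := integral_chamber_laplaceIntegrand_by_parts μ hα hx₀ (hv j hj).2
    (integrableOn_laplaceIntegrand_erase μ hC hcoercive hα (hcoord S rfl) hj
      (fun x hx => ne_zero_of_mem_chamber hx j) hlam)
    fun r hr => integrableOn_laplaceIntegrand μ hC hcoercive hα (hcoord _ (hcard r hr)) hlam
  rw [(hv j hj).1, Complex.ofReal_one, mul_one, Finset.compl_erase,
    Finset.sum_insert (by simpa using hj), Finset.insert_erase hj] at hparts
  rw [eq_inv_mul_iff_mul_eq₀ hlam0, mul_left_comm, hparts, mul_add, Finset.mul_sum]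
  have hjj : ((f j).linear (v j) : ℂ) ≠ 0 :=
    Complex.ofReal_ne_zero.2 (hv.linear_ne_zero (hcoord S rfl) hj)
  congr 1
  · push_cast
    field_simp
  · refine Finset.sum_congr rfl fun r _ => ?_
    push_cast
    ring

theorem hasDerivAt_integral_chamber_laplaceIntegrand {x₀ : E} (hx₀ : ∀ j, f j x₀ ≠ 0)
    (hcoercive : IsCoerciveOn f0 (chamber f x₀)) (hα : ∀ j, 0 < α j)
    (hcoord : ∀ T : Finset ι, T.card = S.card → IsCoordinateSystem f T)
    (hv : IsEdgeSystem f f0 S v) (hX : ∀ j ∈ S, f j X = 0) (hlam : 0 < lam.re) :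
    HasDerivAt (fun l => ∫ x in chamber f x₀, laplaceIntegrand f f0 α S l x ∂μ)
      (-(f0 X * ∫ x in chamber f x₀, laplaceIntegrand f f0 α S lam x ∂μ + lam⁻¹ *
        ((∑ j ∈ S, α j : ℝ) * ∫ x in chamber f x₀, laplaceIntegrand f f0 α S lam x ∂μ +
          ∑ j ∈ S, ∑ r ∈ Sᶜ, (((f j).linear (v j))⁻¹ * (f r).linear (v j) * α r : ℝ) *
            ∫ x in chamber f x₀, laplaceIntegrand f f0 α (insert r (S.erase j)) lam x ∂μ)))
      lam := by
  rw [← sum_inv_linear_mul_integral_erase μ hx₀ hcoercive hα hcoord hv hlam]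
  exact hasDerivAt_setIntegral_laplaceIntegrand μ (isOpen_chamber f x₀).measurableSet hcoercive
    (fun x hx j _ => ne_zero_of_mem_chamber hx j) hα (hcoord S rfl) hv hX hlam

end LaplaceIntegral

section Equation

variable {ι E : Type*} [NormedAddCommGroup E] [NormedSpace ℝ E] {f : ι → E →ᵃ[ℝ] ℝ}
  {f0 : E →ₗ[ℝ] ℝ} {α : ι → ℝ} {k : ℕ} {v : ι → E}

theorem isCoordinateSystem_of_existsUnique (b : Module.Basis (Fin k) ℝ E) {S : Finset ι}
    (hS : S.card = k) (h : ∃! x, ∀ j ∈ S, f j x = 0) : IsCoordinateSystem f S :=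
  ⟨by rw [hS, Module.finrank_eq_card_basis b, Fintype.card_fin], fun _ => eq_zero_of_existsUnique h⟩

variable [Fintype ι] [DecidableEq ι]

theorem sum_coeff_mul_abs_det_mul (b : Module.Basis (Fin k) ℝ E)
    (σ : ∀ T : {T : Finset ι // T.card = k}, Fin k ≃ T.1) {S : {S : Finset ι // S.card = k}}
    (hS : IsCoordinateSystem f S.1) (hv : IsEdgeSystem f f0 S.1 v)
    {B : {T : Finset ι // T.card = k} → ℝ} (hBdiag : B S = ∑ j ∈ S.1, α j)
    (hBzero : ∀ T, S ≠ T → (S.1 ∩ T.1).card < k - 1 → B T = 0)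
    (hBoff : ∀ T, ∀ j r : ι, (S.1 ∩ T.1).card = k - 1 → S.1 \ T.1 = {j} → T.1 \ S.1 = {r} →
      ∀ e : E, (∀ i ∈ S.1 ∩ T.1, (f i).linear e = 0) → f0 e = 1 →
      B T = Real.sign ((f j).linear e * (f r).linear e) * α r)
    (J : Finset ι → ℂ) :
    ∑ T, (B T : ℂ) * ((|(Matrix.of fun i c => (f (σ T i)).linear (b c)).det| : ℝ) * J T.1) =
      (|(Matrix.of fun i c => (f (σ S i)).linear (b c)).det| : ℝ) *
        ((∑ j ∈ S.1, α j : ℝ) * J S.1 + ∑ j ∈ S.1, ∑ r ∈ S.1ᶜ,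
          (((f j).linear (v j))⁻¹ * (f r).linear (v j) * α r : ℝ) *
            J (insert r (S.1.erase j))) := by
  rw [sum_eq_add_sum_exchange S _ (fun j r =>
      (|(Matrix.of fun i c => (f (σ S i)).linear (b c)).det| : ℝ) *
        ((((f j).linear (v j))⁻¹ * (f r).linear (v j) * α r : ℝ) * J (insert r (S.1.erase j))))
    (fun T hST hcard => by rw [hBzero T hST hcard, Complex.ofReal_zero, zero_mul]) ?_]
  · simp only [← Finset.mul_sum]
    rw [hBdiag, mul_left_comm, ← mul_add]
  · intro T j hj r hr hT
    have hinter : S.1 ∩ T.1 = S.1.erase j := by rw [hT, inter_insert_erase hr]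
    have hB := hBoff T j r (by rw [hinter, Finset.card_erase_of_mem hj, S.2])
      (by rw [hT, sdiff_insert_erase hj hr]) (by rw [hT, insert_erase_sdiff hr]) (v j)
      (hinter ▸ (hv j hj).2) (hv j hj).1
    have hsign := congrArg ((↑) : ℝ → ℂ)
      (sign_mul_abs_det_linear b hj hT (σ S) (σ T) (hv j hj).2 (hv.linear_ne_zero hS hj))
    push_cast at hsign ⊢
    rw [hB, ← hT]
    push_cast
    linear_combination (α r : ℂ) * J T.1 * hsign

theorem stmt_3_general [MeasurableSpace E] [BorelSpace E] (μ : Measure E) [μ.IsAddHaarMeasure]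
    (b : Module.Basis (Fin k) ℝ E)
    (hf : ∀ S : Finset ι, S.card = k → ∃! x, ∀ j ∈ S, f j x = 0)
    (hf0 : ∀ U : Finset ι, U.card = k - 1 →
      ∃ x y, (∀ j ∈ U, f j x = 0) ∧ (∀ j ∈ U, f j y = 0) ∧ f0 x ≠ f0 y)
    (hα : ∀ j, 0 < α j) (pt : {S : Finset ι // S.card = k} → E)
    (hpt : ∀ S, ∀ j ∈ S.1, f j (pt S) = 0)
    (σ : ∀ S : {S : Finset ι // S.card = k}, Fin k ≃ S.1) {x₀ : E} (hx₀ : ∀ j, f j x₀ ≠ 0)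
    (hb : BddBelow (f0 '' connectedComponentIn {x | ∀ j, f j x ≠ 0} x₀))
    (I : {S : Finset ι // S.card = k} → ℂ → ℂ)
    (hI : ∀ S lam, I S lam = ∫ x in connectedComponentIn {x | ∀ j, f j x ≠ 0} x₀,
      Complex.exp (-(lam * Complex.ofReal (f0 x))) * Complex.ofReal ((∏ j, |f j x| ^ α j) *
        |(Matrix.of fun i c => (f (σ S i)).linear (b c)).det| * (∏ j ∈ S.1, f j x)⁻¹) ∂μ)
    (A B : {S : Finset ι // S.card = k} → {S : Finset ι // S.card = k} → ℝ)
    (hAdiag : ∀ S, A S S = f0 (pt S)) (hAoff : ∀ S T, S ≠ T → A S T = 0)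
    (hBdiag : ∀ S, B S S = ∑ j ∈ S.1, α j)
    (hBzero : ∀ S T, S ≠ T → (S.1 ∩ T.1).card < k - 1 → B S T = 0)
    (hBoff : ∀ S T, ∀ j r : ι, (S.1 ∩ T.1).card = k - 1 → S.1 \ T.1 = {j} → T.1 \ S.1 = {r} →
      ∀ e : E, (∀ i ∈ S.1 ∩ T.1, (f i).linear e = 0) → f0 e = 1 →
      B S T = Real.sign ((f j).linear e * (f r).linear e) * α r)
    (S : {S : Finset ι // S.card = k}) {lam : ℂ} (hlam : 0 < lam.re) :
    HasDerivAt (I S) (-(∑ T, (Complex.ofReal (A S T) + lam⁻¹ * Complex.ofReal (B S T)) *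
      I T lam)) lam := by
  have := Module.Finite.of_basis b
  rw [connectedComponentIn_eq_chamber hx₀] at hb hI
  have hcoercive : IsCoerciveOn f0 (chamber f x₀) := isCoerciveOn_chamber hx₀ hb fun z =>
    exists_transverse_of_generic hf hf0 (S.2 ▸ Finset.card_le_univ S.1)
  have hcoord (T : Finset ι) (hT : T.card = k) : IsCoordinateSystem f T :=
    isCoordinateSystem_of_existsUnique b hT (hf T hT)
  obtain ⟨v, hv⟩ := exists_isEdgeSystem (S := S.1) (by rwa [S.2])
  have hIdet (T) (l : ℂ) : I T l = (|(Matrix.of fun i c => (f (σ T i)).linear (b c)).det| : ℝ) *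
      ∫ x in chamber f x₀, laplaceIntegrand f f0 α T.1 l x ∂μ := by
    rw [hI, ← integral_const_mul]
    congr 1 with x
    simp only [laplaceIntegrand, masterWeight]
    push_cast
    ring
  have hderiv := hasDerivAt_integral_chamber_laplaceIntegrand μ hx₀ hcoercive hα
    (fun T hT => hcoord T (hT.trans S.2)) hv (hpt S) hlam
  have hBsum := sum_coeff_mul_abs_det_mul b σ (hcoord S.1 S.2) hv (hBdiag S) (hBzero S) (hBoff S)
    fun T => ∫ x in chamber f x₀, laplaceIntegrand f f0 α T lam x ∂μ
  have hAsum : ∑ T, Complex.ofReal (A S T) * I T lam = f0 (pt S) * I S lam := by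
    rw [Finset.sum_eq_single S (fun T _ hT => by rw [hAoff S T hT.symm]; simp)
      (fun h => absurd (Finset.mem_univ S) h), hAdiag]
  rw [funext (hIdet S)]
  refine (hderiv.const_mul _).congr_deriv ?_
  simp only [add_mul, mul_assoc, Finset.sum_add_distrib, ← Finset.mul_sum]
  rw [hAsum]
  simp only [hIdet]
  rw [hBsum]
  ring

end Equation

/-- for every `Δ ∈ 𝒟⁺` each component `λ ↦ I_{Δ,X}(λ)` is holomorphic on
`{Re λ > 0}` and the vector `(I_{Δ,X})_{X ∈ 𝒳}` satisfies the ODE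
`I' = -(𝒜 + λ⁻¹ ℬ) I` with `𝒜` diagonal with entries `f0 X` and `ℬ` as described. -/
theorem stmt_3 {k N : ℕ} (hk : 1 ≤ k) (hkN : k ≤ N)
    (f : Fin N → ((Fin k → ℝ) →ᵃ[ℝ] ℝ)) (hf : Generic f)
    (f0 : (Fin k → ℝ) →ₗ[ℝ] ℝ) (hf0 : GenericLin f f0)
    (α : Fin N → ℝ) (hα : ∀ j, 0 < α j)
    (pt : {S : Finset (Fin N) // S.card = k} → (Fin k → ℝ))
    (hpt : ∀ S : {S : Finset (Fin N) // S.card = k}, IsVertexOf f S.1 (pt S))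
    (I : Set (Fin k → ℝ) → {S : Finset (Fin N) // S.card = k} → ℂ → ℂ)
    (hI : ∀ (Δ : Set (Fin k → ℝ)) (S : {S : Finset (Fin N) // S.card = k}) (lam : ℂ),
      I Δ S lam = ∫ x in Δ, Complex.exp (-(lam * Complex.ofReal (f0 x))) *
        Complex.ofReal ((∏ j, |f j x| ^ α j) *
          |(Matrix.of fun i c : Fin k =>
            (f ((S.1.orderIsoOfFin S.2 i : S.1) : Fin N)).linear
              (Pi.single c 1)).det| *
          (∏ j ∈ S.1, f j x)⁻¹))
    (A B : {S : Finset (Fin N) // S.card = k} →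
      {S : Finset (Fin N) // S.card = k} → ℝ)
    (hAdiag : ∀ S : {S : Finset (Fin N) // S.card = k}, A S S = f0 (pt S))
    (hAoff : ∀ S T : {S : Finset (Fin N) // S.card = k}, S ≠ T → A S T = 0)
    (hBdiag : ∀ S : {S : Finset (Fin N) // S.card = k}, B S S = ∑ j ∈ S.1, α j)
    (hBzero : ∀ S T : {S : Finset (Fin N) // S.card = k}, S ≠ T →
      (S.1 ∩ T.1).card < k - 1 → B S T = 0)
    (hBoff : ∀ S T : {S : Finset (Fin N) // S.card = k}, ∀ j r : Fin N,
      (S.1 ∩ T.1).card = k - 1 → S.1 \ T.1 = {j} → T.1 \ S.1 = {r} →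
      ∀ e : Fin k → ℝ, (∀ i ∈ S.1 ∩ T.1, (f i).linear e = 0) → f0 e = 1 →
      B S T = Real.sign ((f j).linear e * (f r).linear e) * α r) :
    ∀ Δ : Set (Fin k → ℝ), MemDplus f f0 Δ →
      (∀ S : {S : Finset (Fin N) // S.card = k},
        DifferentiableOn ℂ (I Δ S) {lam : ℂ | 0 < lam.re}) ∧
      (∀ S : {S : Finset (Fin N) // S.card = k}, ∀ lam : ℂ, 0 < lam.re →
        HasDerivAt (I Δ S)
          (-(∑ T : {S : Finset (Fin N) // S.card = k},
            (Complex.ofReal (A S T) + lam⁻¹ * Complex.ofReal (B S T)) * I Δ T lam))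
          lam) := by
  rintro Δ ⟨⟨x₀, hx₀, rfl⟩, hb⟩
  have ode := stmt_3_general volume (Pi.basisFun ℝ (Fin k)) hf.2.1 hf0.2 hα pt
    (fun S => (hpt S).2) (fun S => (S.1.orderIsoOfFin S.2).toEquiv) hx₀ hb _
    (fun S lam => by simp only [Pi.basisFun_apply]; exact hI _ S lam) A B hAdiag hAoff hBdiag
    hBzero hBoff
  exact ⟨fun S lam hlam => (ode S hlam).differentiableAt.differentiableWithinAt,
    fun S lam hlam => ode S hlam⟩

end HypArr
end
end
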